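/- Assume condition (C) and let (K,c) ∈ D₁ ∪ D₂. Set ω₀ = √(−g₁(u₀) f'(u₀)) > 0. Then for every ε > 0 there exists δ > 0 such that: if q lies in the admissible interval ((u₁,u₀) when (K,c) ∈ D₁ with μ_b ≥ μ_f, and (u₀,u₂) when (K,c) ∈ D₁ with μ_b < μ_f or (K,c) ∈ D₂) with |q − u₀| < δ, and (u,w) is a nonconstant periodic solution of (TV) with parameter μ and initial condition (u(0),w(0)) = (q,0), then |μ + f'(u₀)| < ε, the minimal period Z of (u,w) satisfies |Z − 2π/ω₀| < ε, and sup_{z∈ℝ} |(u(z),w(z)) − (u₀,0)| < ε. Equivalently, as q → u₀, μ_per(K,c,q) → −f'(u₀), Z_per → 2π/ω₀, and the periodic orbit converges in Hausdorff distance to the single point {(u₀,0)}. -/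

import Mathlib

open Set Filter MeasureTheory

noncomputable section

namespace TrafficTW

/-- `f(u) = (K u - V(u) - c)/K`. -/
def fTV (V : ℝ → ℝ) (K c u : ℝ) : ℝ := (K * u - V u - c) / K

/-- `f'(u) = (K - V'(u))/K`. -/
def fdTV (V' : ℝ → ℝ) (K u : ℝ) : ℝ := (K - V' u) / K

/-- `h(u,μ) = f'(u) + μ`. -/
def hTV (V' : ℝ → ℝ) (K μ u : ℝ) : ℝ := fdTV V' K u + μ

/-- `g₁(u) = 1/(τ κ(1/u))`. -/
def g1TV (κ : ℝ → ℝ) (τ u : ℝ) : ℝ := 1 / (τ * κ (1 / u))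

/-- `g₂(u) = u/(2 τ κ(1/u))`. -/
def g2TV (κ : ℝ → ℝ) (τ u : ℝ) : ℝ := u / (2 * τ * κ (1 / u))

/-- The traveling-wave system (TV): `u' = w`, `w' = g₁ f + g₂ h w`. -/
def IsTVSol (V V' κ : ℝ → ℝ) (τ K c μ : ℝ) (u w : ℝ → ℝ) : Prop :=
  (∀ z, HasDerivAt u (w z) z) ∧
  (∀ z, HasDerivAt w
    (g1TV κ τ (u z) * fTV V K c (u z) + g2TV κ τ (u z) * hTV V' K μ (u z) * w z) z)

/-- Assumption (A1), where `V'` and `V''` are the first and second derivatives of `V`. -/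
def A1 (V V' V'' : ℝ → ℝ) (UM : ℝ) : Prop :=
  (∀ u ∈ Ici (0:ℝ), HasDerivWithinAt V (V' u) (Ici 0) u) ∧
  ContinuousOn V' (Ici 0) ∧
  (∀ u ∈ Ioi (0:ℝ), HasDerivAt V' (V'' u) u) ∧
  ContinuousOn V'' (Ioi 0) ∧
  (∀ u, 0 < u → 0 < V' u) ∧ (∃ M, ∀ u, 0 < u → V' u ≤ M) ∧
  Tendsto V' atTop (nhds 0) ∧
  0 < UM ∧ (∀ u, 0 < u → V' u ≤ V' UM) ∧
  (∀ u, 0 < u → (V'' u = 0 ↔ u = UM))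

/-- Assumption (A2). -/
def A2 (κ : ℝ → ℝ) : Prop :=
  ContDiffOn ℝ 1 κ (Ioi 0) ∧ ∀ ρ, 0 < ρ → 0 < κ ρ

/-- `c₀ = -V(0)`. -/
def c0v (V : ℝ → ℝ) : ℝ := - V 0

/-- `c_M(K) = K u_M(K) - V(u_M(K))`, where `uMx` is the function `K ↦ u_M(K)`. -/
def cMf (V : ℝ → ℝ) (uMx : ℝ → ℝ) (K : ℝ) : ℝ := K * uMx K - V (uMx K)

/-- `c_m(K) = K u_m(K) - V(u_m(K))`, where `umx` is the function `K ↦ u_m(K)`. -/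
def cmf (V : ℝ → ℝ) (umx : ℝ → ℝ) (K : ℝ) : ℝ := K * umx K - V (umx K)

/-- `c₁(K) = max (c₀, c_m(K))`. -/
def c1f (V : ℝ → ℝ) (umx : ℝ → ℝ) (K : ℝ) : ℝ := max (c0v V) (cmf V umx K)

/-- `uMx K = u_M(K)` is the unique local maximum point of `u ↦ K u - V(u)`, characterized
by `u_M(K) ∈ (0, U_M)` and `V'(u_M(K)) = K`, for `K ∈ (K₀, K_M)`. -/
def UMaxHyp (V' : ℝ → ℝ) (UM : ℝ) (uMx : ℝ → ℝ) : Prop :=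
  ∀ K, V' 0 < K → K < V' UM → uMx K ∈ Ioo 0 UM ∧ V' (uMx K) = K

/-- `umx K = u_m(K)` is the unique local minimum point of `u ↦ K u - V(u)`, characterized
by `u_m(K) ∈ (U_M, ∞)` and `V'(u_m(K)) = K`, for `K ∈ (0, K_M)`. -/
def UMinHyp (V' : ℝ → ℝ) (UM : ℝ) (umx : ℝ → ℝ) : Prop :=
  ∀ K, 0 < K → K < V' UM → UM < umx K ∧ V' (umx K) = K

/-- Characterization of `K₁ ∈ (K₀, K_M)`: `c_m(K) < c₀` for `K < K₁` and `c_m(K) > c₀`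
for `K > K₁`. -/
def K1Hyp (V V' : ℝ → ℝ) (UM : ℝ) (umx : ℝ → ℝ) (K₁ : ℝ) : Prop :=
  V' 0 < K₁ ∧ K₁ < V' UM ∧
  (∀ K, 0 < K → K < K₁ → cmf V umx K < c0v V) ∧
  cmf V umx K₁ = c0v V ∧
  (∀ K, K₁ < K → K < V' UM → c0v V < cmf V umx K)

/-- The parameter region `D₁`. -/
def D1 (V V' : ℝ → ℝ) (UM : ℝ) (uMx umx : ℝ → ℝ) : Set (ℝ × ℝ) :=
  {p | V' 0 < p.1 ∧ p.1 < V' UM ∧ c1f V umx p.1 < p.2 ∧ p.2 < cMf V uMx p.1}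

/-- The parameter region `D₂`. -/
def D2 (V V' : ℝ → ℝ) (umx : ℝ → ℝ) (K₁ : ℝ) : Set (ℝ × ℝ) :=
  {p | (V' 0 < p.1 ∧ p.1 < K₁ ∧ p.2 = c0v V) ∨
       (0 < p.1 ∧ p.1 < K₁ ∧ cmf V umx p.1 < p.2 ∧ p.2 < c0v V)}

/-- For `(K,c) ∈ D₁`: `u₁ < u₀ < u₂` are the exactly three positive zeros of `f`. -/
def ZerosD1 (V : ℝ → ℝ) (K c u1 u0 u2 : ℝ) : Prop :=
  0 < u1 ∧ u1 < u0 ∧ u0 < u2 ∧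
  fTV V K c u1 = 0 ∧ fTV V K c u0 = 0 ∧ fTV V K c u2 = 0 ∧
  ∀ u, 0 < u → fTV V K c u = 0 → u = u1 ∨ u = u0 ∨ u = u2

/-- For `(K,c) ∈ D₂`: `u₀ < u₂` are the exactly two positive zeros of `f`. -/
def ZerosD2 (V : ℝ → ℝ) (K c u0 u2 : ℝ) : Prop :=
  0 < u0 ∧ u0 < u2 ∧ fTV V K c u0 = 0 ∧ fTV V K c u2 = 0 ∧
  ∀ u, 0 < u → fTV V K c u = 0 → u = u0 ∨ u = u2

/-- Condition (HE1). -/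
def HE1 (u1 u2 : ℝ) (u w : ℝ → ℝ) : Prop :=
  Tendsto u atBot (nhds u1) ∧ Tendsto u atTop (nhds u2) ∧
  Tendsto w atBot (nhds 0) ∧ Tendsto w atTop (nhds 0) ∧ ∀ z, 0 < w z

/-- Condition (HE2). -/
def HE2 (u1 u2 : ℝ) (u w : ℝ → ℝ) : Prop :=
  Tendsto u atBot (nhds u2) ∧ Tendsto u atTop (nhds u1) ∧
  Tendsto w atBot (nhds 0) ∧ Tendsto w atTop (nhds 0) ∧ ∀ z, w z < 0

/-- Condition (HO) with level `ub`. -/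
def HO (ub : ℝ) (u w : ℝ → ℝ) : Prop :=
  Tendsto u atBot (nhds ub) ∧ Tendsto u atTop (nhds ub) ∧
  Tendsto w atBot (nhds 0) ∧ Tendsto w atTop (nhds 0) ∧
  ¬ (∀ z, u z = ub ∧ w z = 0)

/-- (TV) with parameter `μ` has a positive solution satisfying (HE1). -/
def HasHE1 (V V' κ : ℝ → ℝ) (τ K c μ u1 u2 : ℝ) : Prop :=
  ∃ u w : ℝ → ℝ, IsTVSol V V' κ τ K c μ u w ∧ (∀ z, 0 < u z) ∧ HE1 u1 u2 u w

/-- (TV) with parameter `μ` has a positive solution satisfying (HE2). -/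
def HasHE2 (V V' κ : ℝ → ℝ) (τ K c μ u1 u2 : ℝ) : Prop :=
  ∃ u w : ℝ → ℝ, IsTVSol V V' κ τ K c μ u w ∧ (∀ z, 0 < u z) ∧ HE2 u1 u2 u w

/-- (TV) with parameter `μ` has a positive solution satisfying (HO) with level `ub`. -/
def HasHO (V V' κ : ℝ → ℝ) (τ K c μ ub : ℝ) : Prop :=
  ∃ u w : ℝ → ℝ, IsTVSol V V' κ τ K c μ u w ∧ (∀ z, 0 < u z) ∧ HO ub u w

/-- Condition (H): `∫₁^∞ dρ/(ρ³ κ(ρ)) = ∞`. -/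
def CondH (κ : ℝ → ℝ) : Prop :=
  ¬ IntegrableOn (fun ρ => 1 / (ρ ^ 3 * κ ρ)) (Ioi 1)

/-- Condition (C). -/
def CondC (V' κ : ℝ → ℝ) (UM K₁ K : ℝ) : Prop :=
  (K₁ < K ∧ K < V' UM) ∨ (CondH κ ∧ V' 0 < K ∧ K ≤ K₁)

/-- Periodic solution. -/
def IsPeriodicSol (u w : ℝ → ℝ) : Prop :=
  ∃ Z, 0 < Z ∧ ∀ z, u (z + Z) = u z ∧ w (z + Z) = w z

/-- Nonconstant pair of functions. -/
def Nonconst (u w : ℝ → ℝ) : Prop := ∃ z, u z ≠ u 0 ∨ w z ≠ w 0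

/-- Discriminant of the Jacobian at an equilibrium `(u,0)`. -/
def discTV (V' κ : ℝ → ℝ) (τ K u μ : ℝ) : ℝ :=
  (g2TV κ τ u) ^ 2 * (hTV V' K μ u) ^ 2 + 4 * g1TV κ τ u * fdTV V' K u

/-- The eigenvalue `λ₊(u)`. -/
def lamP (V' κ : ℝ → ℝ) (τ K u μ : ℝ) : ℝ :=
  (g2TV κ τ u * hTV V' K μ u + Real.sqrt (discTV V' κ τ K u μ)) / 2

/-- The eigenvalue `λ₋(u)`. -/
def lamM (V' κ : ℝ → ℝ) (τ K u μ : ℝ) : ℝ :=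
  (g2TV κ τ u * hTV V' K μ u - Real.sqrt (discTV V' κ τ K u μ)) / 2

/-- `Z` is the minimal period of `(u,w)`. -/
def IsMinPeriod (u w : ℝ → ℝ) (Z : ℝ) : Prop :=
  0 < Z ∧ (∀ z, u (z + Z) = u z ∧ w (z + Z) = w z) ∧
  ∀ Z', 0 < Z' → (∀ z, u (z + Z') = u z ∧ w (z + Z') = w z) → Z ≤ Z'

section

open scoped Topology

/-!
The equation `u'' = g₁(u) f(u) + g₂(u) (f'(u) + μ) u'` is the motion of a particle with damping
coefficient `g₂(u) (f'(u) + μ)`, and since `f'(u₀) < 0`, the point `u₀` lies at the bottom of a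
potential well. If `μ` stays away from `-f'(u₀)`, the damping has a constant sign in a neighborhood
of `u₀`; an orbit starting at rest near `u₀` is trapped there by its energy, which is strictly
monotone, so the orbit is not periodic. Hence `μ → -f'(u₀)` as `q → u₀`.

In the coordinates `ω₀ (u - u₀) + i w` the system then is a small perturbation of the rotation with
angular velocity `-ω₀`, so the orbit is back on its initial side of the axis `w = 0` after a time
close to `2π/ω₀`. Because `f` is first concave and then convex, it changes sign from `+` to `-` only
at `u₀`, so all crossings of the axis to the left of `u₀` are upward and all those to the right
downward. Two arcs of a closed orbit on the same side of the axis would intersect if their end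
points were different, so the orbit meets the axis only once on each side of `u₀`, and the first
return is a full period. Conversely, the perturbed rotation has no much shorter period.
-/

/-! ### Solution curves of planar second-order systems -/

theorem eq_of_hasDerivAt_of_locallyLipschitzOn {E : Type*} [NormedAddCommGroup E]
    [NormedSpace ℝ E] {v : E → E} {s : Set E} (hv : LocallyLipschitzOn s v) {f g : ℝ → E}
    (hf : ∀ t, HasDerivAt f (v (f t)) t) (hfs : ∀ t, f t ∈ s)
    (hg : ∀ t, HasDerivAt g (v (g t)) t) (hgs : ∀ t, g t ∈ s) {t₀ : ℝ} (h₀ : f t₀ = g t₀) :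
    f = g := by
  have hfc : Continuous f := continuous_iff_continuousAt.2 fun t => (hf t).continuousAt
  have hgc : Continuous g := continuous_iff_continuousAt.2 fun t => (hg t).continuousAt
  funext t
  obtain ⟨a, b, ht, ht₀⟩ : ∃ a b, t ∈ Icc a b ∧ t₀ ∈ Ioo a b :=
    ⟨min t t₀ - 1, max t t₀ + 1, by grind, by grind⟩
  obtain ⟨L, hL⟩ := (hv.mono (union_subset (image_subset_iff.2 fun x _ => hfs x)
    (image_subset_iff.2 fun x _ => hgs x))).exists_lipschitzOnWith_of_compact
    ((isCompact_Icc.image hfc).union (isCompact_Icc.image hgc) :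
      IsCompact (f '' Icc a b ∪ g '' Icc a b))
  exact ODE_solution_unique_of_mem_Icc (fun _ _ => hL) ht₀ hfc.continuousOn (fun t _ => hf t)
    (fun t ht => .inl (mem_image_of_mem f (Ioo_subset_Icc_self ht))) hgc.continuousOn
    (fun t _ => hg t) (fun t ht => .inr (mem_image_of_mem g (Ioo_subset_Icc_self ht))) h₀ ht

/-- `(u, w)` solves the planar system `u' = w`, `w' = F (u, w)` on the whole line, i.e. `u` solves
the second-order equation `u'' = F (u, u')` and `(u, u')` is its trajectory in the phase plane. -/
def IsPhaseCurve (F : ℝ × ℝ → ℝ) (u w : ℝ → ℝ) : Prop :=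
  (∀ t, HasDerivAt u (w t) t) ∧ ∀ t, HasDerivAt w (F (u t, w t)) t

namespace IsPhaseCurve

variable {F : ℝ × ℝ → ℝ} {u w : ℝ → ℝ}

theorem comp_const_add (h : IsPhaseCurve F u w) (s : ℝ) :
    IsPhaseCurve F (fun t => u (s + t)) fun t => w (s + t) :=
  ⟨fun t => (h.1 (s + t)).comp_const_add s t, fun t => (h.2 (s + t)).comp_const_add s t⟩

theorem eq_of_eq_at {s : Set (ℝ × ℝ)} (hF : LocallyLipschitzOn s F) {u₁ w₁ u₂ w₂ : ℝ → ℝ}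
    (h₁ : IsPhaseCurve F u₁ w₁) (hs₁ : ∀ t, (u₁ t, w₁ t) ∈ s) (h₂ : IsPhaseCurve F u₂ w₂)
    (hs₂ : ∀ t, (u₂ t, w₂ t) ∈ s) {t₀ : ℝ} (hu : u₁ t₀ = u₂ t₀) (hw : w₁ t₀ = w₂ t₀) :
    u₁ = u₂ ∧ w₁ = w₂ := by
  have hlip : LocallyLipschitzOn s fun y : ℝ × ℝ => (y.2, F y) := by
    intro y hy
    obtain ⟨L, t, ht, hL⟩ := hF hy
    exact ⟨max 1 L, t, ht, (LipschitzWith.prod_snd.lipschitzOnWith).prodMk hL⟩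
  have := eq_of_hasDerivAt_of_locallyLipschitzOn hlip (f := fun t => (u₁ t, w₁ t))
    (g := fun t => (u₂ t, w₂ t)) (fun t => (h₁.1 t).prodMk (h₁.2 t)) hs₁
    (fun t => (h₂.1 t).prodMk (h₂.2 t)) hs₂ (Prod.ext hu hw)
  exact ⟨funext fun t => congrArg Prod.fst (congrFun this t),
    funext fun t => congrArg Prod.snd (congrFun this t)⟩

theorem eq_add_of_eq {s : Set (ℝ × ℝ)} (hF : LocallyLipschitzOn s F) (h : IsPhaseCurve F u w)
    (hs : ∀ t, (u t, w t) ∈ s) {a b : ℝ} (hu : u a = u b) (hw : w a = w b) (t : ℝ) :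
    u (a + t) = u (b + t) ∧ w (a + t) = w (b + t) := by
  have := eq_of_eq_at hF (h.comp_const_add a) (fun t => hs (a + t)) (h.comp_const_add b)
    (fun t => hs (b + t)) (t₀ := 0) (by simpa using hu) (by simpa using hw)
  exact ⟨congrFun this.1 t, congrFun this.2 t⟩

theorem not_equilibrium {s : Set (ℝ × ℝ)} (hF : LocallyLipschitzOn s F)
    (h : IsPhaseCurve F u w) (hs : ∀ t, (u t, w t) ∈ s) (hne : Nonconst u w) {t : ℝ}
    (hw : w t = 0) : F (u t, 0) ≠ 0 := by
  intro hF0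
  have hconst : IsPhaseCurve F (fun _ => u t) fun _ => 0 :=
    ⟨fun z => hasDerivAt_const z _, fun z => by simpa only [hF0] using hasDerivAt_const z _⟩
  obtain ⟨hu, hw⟩ := eq_of_eq_at hF h hs hconst (fun _ => hw ▸ hs t) (t₀ := t) rfl hw
  obtain ⟨z, hz⟩ := hne
  have hu' (x) : u x = u t := congrFun hu x
  have hw' (x) : w x = 0 := congrFun hw x
  simp [hu', hw'] at hz

end IsPhaseCurve

/-! ### Loops in the phase plane -/

theorem hasDerivAt_comp_neg {f : ℝ → ℝ} {d x : ℝ} (hf : HasDerivAt f d (-x)) :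
    HasDerivAt (fun t => f (-t)) (-d) x :=
  (hf.comp x (hasDerivAt_neg x)).congr_deriv (mul_neg_one d)

theorem reverse_periodic {u w : ℝ → ℝ} {Z : ℝ} (h : ∀ t, u (t + Z) = u t ∧ w (t + Z) = w t)
    (t : ℝ) : u (-(t + Z)) = u (-t) ∧ -w (-(t + Z)) = -w (-t) := by
  have := h (-(t + Z))
  rw [neg_add, neg_add_cancel_right] at this
  exact ⟨neg_add t Z ▸ this.1.symm, neg_add t Z ▸ congrArg Neg.neg this.2.symm⟩

theorem forall_of_forall_mem_Ico_of_periodic {P : ℝ → ℝ → Prop} {u w : ℝ → ℝ} {Z : ℝ}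
    (h : ∀ t, u (t + Z) = u t ∧ w (t + Z) = w t) (hZ : 0 < Z)
    (hP : ∀ s ∈ Ico 0 Z, P (u s) (w s)) (t : ℝ) : P (u t) (w t) := by
  obtain ⟨s, hs, hts⟩ := Function.Periodic.exists_mem_Ico₀ (f := fun t => (u t, w t))
    (fun t => Prod.ext (h t).1 (h t).2) hZ t
  obtain ⟨hut, hwt⟩ := Prod.ext_iff.1 hts
  dsimp only at hut hwt
  rw [hut, hwt]
  exact hP s hs

theorem exists_first_zero_of_hasDerivAt_pos {f : ℝ → ℝ} (hf : Continuous f) {d s e : ℝ}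
    (hd : HasDerivAt f d s) (hd0 : 0 < d) (hs : f s = 0) (hse : s < e) (he : f e = 0) :
    ∃ b, s < b ∧ f b = 0 ∧ ∀ t ∈ Ioo s b, 0 < f t := by
  obtain ⟨ρ, hρ, hsign⟩ := Metric.eventually_nhds_iff.1
    (eventually_nhdsWithin_sign_eq_of_deriv_pos (hd.deriv.symm ▸ hd0) hs)
  have hpos (t : ℝ) (hst : s < t) (ht : t < s + ρ) : 0 < f t := by
    have hdist : dist t s < ρ := by
      rw [Real.dist_eq, abs_lt]
      constructor <;> linarith
    rw [← sign_eq_one_iff, hsign hdist, sign_eq_one_iff]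
    linarith
  obtain ⟨m, hsm, hm⟩ : ∃ m, s < m ∧ m < min (s + ρ) e :=
    exists_between (lt_min (by linarith) hse)
  have hmρ := hm.trans_le (min_le_left _ _)
  obtain ⟨b, ⟨hb, hb0⟩, hleast⟩ := (isCompact_Icc.inter_right
    (isClosed_singleton.preimage hf)).exists_isLeast
    (⟨e, ⟨(hm.trans_le (min_le_right _ _)).le, le_rfl⟩, he⟩ : (Icc m e ∩ f ⁻¹' {0}).Nonempty)
  refine ⟨b, hsm.trans_le hb.1, hb0, fun t ht => ?_⟩
  rcases le_or_gt t m with htm | hmt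
  · exact hpos t ht.1 (htm.trans_lt hmρ)
  by_contra! hft
  obtain ⟨x, hx, hx0⟩ := intermediate_value_Icc' hmt.le hf.continuousOn ⟨hft, (hpos m hsm hmρ).le⟩
  exact (hleast ⟨⟨hx.1, hx.2.trans (ht.2.le.trans hb.2)⟩, hx0⟩).not_gt (hx.2.trans_lt ht.2)

theorem exists_min_max_of_periodic {f : ℝ → ℝ} {Z : ℝ} (hf : Function.Periodic f Z) (hZ : 0 < Z)
    (hc : Continuous f) : ∃ m M, (∀ t, f m ≤ f t) ∧ ∀ t, f t ≤ f M := by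
  have hcompact := hf.compact_of_continuous hZ.ne' hc
  obtain ⟨_, ⟨m, rfl⟩, hm⟩ := hcompact.exists_isLeast (range_nonempty f)
  obtain ⟨_, ⟨M, rfl⟩, hM⟩ := hcompact.exists_isGreatest (range_nonempty f)
  exact ⟨m, M, fun t => hm (mem_range_self t), fun t => hM (mem_range_self t)⟩

theorem exists_continuousOn_rightInverse_Icc {f : ℝ → ℝ} {a b : ℝ} (hab : a ≤ b)
    (hf : StrictMonoOn f (Icc a b)) (hc : ContinuousOn f (Icc a b)) :
    ∃ g, ContinuousOn g (Icc (f a) (f b)) ∧ MapsTo g (Icc (f a) (f b)) (Icc a b) ∧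
      RightInvOn g f (Icc (f a) (f b)) := by
  have himage : f '' Icc a b = Icc (f a) (f b) :=
    (hf.monotoneOn.image_Icc_subset).antisymm (intermediate_value_Icc hab hc)
  have : OrdConnected (f '' Icc a b) := himage ▸ ordConnected_Icc
  let e := hf.orderIso f (Icc a b)
  have he (y : f '' Icc a b) : f (e.symm y) = y := congrArg Subtype.val (e.apply_symm_apply y)
  have hg : ∃ g : ℝ → ℝ, ∀ y : f '' Icc a b, g y = e.symm y :=
    ⟨Function.extend Subtype.val (fun y => (e.symm y : ℝ)) 0,
      fun y => Subtype.val_injective.extend_apply _ _ y⟩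
  obtain ⟨g, hg⟩ := hg
  rw [← himage]
  refine ⟨g, ?_, fun y hy => ?_, fun y hy => ?_⟩
  · rw [continuousOn_iff_continuous_domRestrict]
    exact (continuous_subtype_val.comp e.symm.continuous).congr fun y => (hg y).symm
  · rw [hg ⟨y, hy⟩]
    exact (e.symm _).2
  · rw [hg ⟨y, hy⟩, he]

/-- `[a, b]` is the time interval of an arc of a phase curve `(u, w)` in the closed upper half-plane
joining two consecutive zeros of `w`. -/
structure IsUpperArc (w : ℝ → ℝ) (a b : ℝ) : Prop where
  lt : a < b
  left : w a = 0
  right : w b = 0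
  pos : ∀ t ∈ Ioo a b, 0 < w t

namespace IsUpperArc

variable {u w : ℝ → ℝ} {a b : ℝ}

theorem nonneg (h : IsUpperArc w a b) {t : ℝ} (ht : t ∈ Icc a b) : 0 ≤ w t := by
  rcases ht.1.eq_or_lt with rfl | hat
  · exact h.left.ge
  rcases ht.2.eq_or_lt with rfl | htb
  · exact h.right.ge
  exact (h.pos t ⟨hat, htb⟩).le

theorem strictMonoOn (h : IsUpperArc w a b) (hu : ∀ t, HasDerivAt u (w t) t) :
    StrictMonoOn u (Icc a b) :=
  strictMonoOn_of_hasDerivWithinAt_pos (convex_Icc a b)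
    (fun t _ => (hu t).continuousAt.continuousWithinAt)
    (fun t _ => (hu t).hasDerivWithinAt) fun t ht => h.pos t (interior_Icc (a := a) ▸ ht)

theorem exists_common_point (hw : Continuous w) (hu : ∀ t, HasDerivAt u (w t) t) {s₁ t₁ s₂ t₂ : ℝ}
    (h₁ : IsUpperArc w s₁ t₁) (h₂ : IsUpperArc w s₂ t₂) (hs : u s₁ ≤ u s₂) (hst : u s₂ ≤ u t₁)
    (ht : u t₁ ≤ u t₂) : ∃ x ∈ Icc s₁ t₁, ∃ y ∈ Icc s₂ t₂, u x = u y ∧ w x = w y := by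
  have huc (s : Set ℝ) : ContinuousOn u s := fun t _ => (hu t).continuousAt.continuousWithinAt
  obtain ⟨g, hgc, hg, hug⟩ := exists_continuousOn_rightInverse_Icc h₁.lt.le (h₁.strictMonoOn hu)
    (huc _)
  obtain ⟨y₁, hy₁, huy₁⟩ := intermediate_value_Icc h₂.lt.le (huc _) ⟨hst, ht⟩
  have hmaps : MapsTo u (Icc s₂ y₁) (Icc (u s₁) (u t₁)) := fun y hy =>
    have hy₂ : y ∈ Icc s₂ t₂ := ⟨hy.1, hy.2.trans hy₁.2⟩
    have hmono := (h₂.strictMonoOn hu).monotoneOn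
    ⟨hs.trans (hmono (left_mem_Icc.2 h₂.lt.le) hy₂ hy.1), huy₁ ▸ hmono hy₂ hy₁ hy.2⟩
  have hgap : ContinuousOn (fun y => w (g (u y)) - w y) (Icc s₂ y₁) :=
    (hw.comp_continuousOn (hgc.comp (huc _) hmaps)).sub hw.continuousOn
  have hend : g (u y₁) = t₁ :=
    (h₁.strictMonoOn hu).injOn (hg (hmaps (right_mem_Icc.2 hy₁.1))) (right_mem_Icc.2 h₁.lt.le)
      ((hug (hmaps (right_mem_Icc.2 hy₁.1))).trans huy₁)
  have hstart : 0 ≤ w (g (u s₂)) - w s₂ := by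
    rw [h₂.left, sub_zero]
    exact h₁.nonneg (hg (hmaps (left_mem_Icc.2 hy₁.1)))
  have hfinish : w (g (u y₁)) - w y₁ ≤ 0 := by
    rw [hend, h₁.right, zero_sub]
    exact neg_nonpos.2 (h₂.nonneg hy₁)
  obtain ⟨y, hy, hyw⟩ := intermediate_value_Icc' hy₁.1 hgap ⟨hfinish, hstart⟩
  exact ⟨g (u y), hg (hmaps hy), y, ⟨hy.1, hy.2.trans hy₁.2⟩, hug (hmaps hy), sub_eq_zero.1 hyw⟩

end IsUpperArc

/-- `(u, w)` is a periodic orbit of an autonomous system `u' = w`, `w' = …` which crosses the axis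
`w = 0` transversally, upwards to the left of `u₀` and downwards to the right of `u₀`. Of the system
only its consequence `autonomous` is kept: the phase point determines its past and future. -/
structure IsClockwiseLoop (u w w' : ℝ → ℝ) (u₀ Z : ℝ) : Prop where
  hasDerivAt_fst : ∀ t, HasDerivAt u (w t) t
  hasDerivAt_snd : ∀ t, HasDerivAt w (w' t) t
  crossing : ∀ t, w t = 0 → (u t < u₀ ∧ 0 < w' t) ∨ (u₀ < u t ∧ w' t < 0)
  autonomous : ∀ {a b}, u a = u b → w a = w b → ∀ t, u (a + t) = u (b + t) ∧ w (a + t) = w (b + t)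
  period_pos : 0 < Z
  periodic : ∀ t, u (t + Z) = u t ∧ w (t + Z) = w t

namespace IsClockwiseLoop

variable {u w w' : ℝ → ℝ} {u₀ Z a b s t : ℝ}

theorem continuous_fst (h : IsClockwiseLoop u w w' u₀ Z) : Continuous u :=
  continuous_iff_continuousAt.2 fun t => (h.hasDerivAt_fst t).continuousAt

theorem continuous_snd (h : IsClockwiseLoop u w w' u₀ Z) : Continuous w :=
  continuous_iff_continuousAt.2 fun t => (h.hasDerivAt_snd t).continuousAt

theorem ne_of_eq_zero (h : IsClockwiseLoop u w w' u₀ Z) (ht : w t = 0) : u t ≠ u₀ :=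
  (h.crossing t ht).elim (fun H => H.1.ne) fun H => H.1.ne'

theorem reflect (h : IsClockwiseLoop u w w' u₀ Z) :
    IsClockwiseLoop (fun t => u (-t)) (fun t => -w (-t)) (fun t => w' (-t)) u₀ Z where
  hasDerivAt_fst t := hasDerivAt_comp_neg (h.hasDerivAt_fst (-t))
  hasDerivAt_snd t := by simpa using (hasDerivAt_comp_neg (h.hasDerivAt_snd (-t))).fun_neg
  crossing t ht := h.crossing (-t) (neg_eq_zero.1 ht)
  autonomous hu hw t := by
    simpa only [neg_add, neg_inj] using h.autonomous hu (neg_injective hw) (-t)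
  period_pos := h.period_pos
  periodic := reverse_periodic h.periodic

theorem exists_upperArc_from (h : IsClockwiseLoop u w w' u₀ Z) (hs : w s = 0) (hus : u s < u₀) :
    ∃ b, IsUpperArc w s b := by
  have hup : 0 < w' s := ((h.crossing s hs).resolve_right fun H => H.1.not_gt hus).2
  obtain ⟨b, hsb, hb, hpos⟩ := exists_first_zero_of_hasDerivAt_pos h.continuous_snd
    (h.hasDerivAt_snd s) hup hs (lt_add_of_pos_right s h.period_pos) ((h.periodic s).2.trans hs)
  exact ⟨b, hsb, hs, hb, hpos⟩

theorem exists_upperArc_to (h : IsClockwiseLoop u w w' u₀ Z) (hs : w s = 0) (hus : u₀ < u s) :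
    ∃ a, IsUpperArc w a s := by
  have hdown : w' s < 0 := ((h.crossing s hs).resolve_left fun H => H.1.not_gt hus).2
  have hderiv : HasDerivAt (fun t => w (-t)) (-w' s) (-s) :=
    hasDerivAt_comp_neg ((neg_neg s).symm ▸ h.hasDerivAt_snd s)
  have hend : w (-(-s + Z)) = 0 := by
    rw [← (h.periodic _).2]
    simpa using hs
  obtain ⟨a, hsa, ha, hpos⟩ := exists_first_zero_of_hasDerivAt_pos
    (h.continuous_snd.comp continuous_neg) hderiv (neg_pos.2 hdown) (by simpa using hs)
    (lt_add_of_pos_right (-s) h.period_pos) hend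
  refine ⟨-a, by linarith, ha, hs, fun t ht => ?_⟩
  simpa using hpos (-t) ⟨neg_lt_neg ht.2, neg_lt.1 ht.1⟩

theorem upperArc_left_lt (h : IsClockwiseLoop u w w' u₀ Z) (harc : IsUpperArc w a b) :
    u a < u₀ := by
  refine ((h.crossing a harc.left).resolve_right fun H => ?_).1
  have hsign := eventually_nhdsWithin_sign_eq_of_deriv_neg
    ((h.hasDerivAt_snd a).deriv.symm ▸ H.2) harc.left
  obtain ⟨x, hx, hxab⟩ := ((hsign.filter_mono nhdsWithin_le_nhds).and
    (Ioo_mem_nhdsGT harc.lt)).exists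
  rw [sign_pos (harc.pos x hxab), sign_neg (sub_neg.2 hxab.1)] at hx
  exact absurd hx (by decide)

theorem upperArc_lt_right (h : IsClockwiseLoop u w w' u₀ Z) (harc : IsUpperArc w a b) :
    u₀ < u b := by
  refine ((h.crossing b harc.right).resolve_left fun H => ?_).1
  have hsign := eventually_nhdsWithin_sign_eq_of_deriv_pos
    ((h.hasDerivAt_snd b).deriv.symm ▸ H.2) harc.right
  obtain ⟨x, hx, hxab⟩ := ((hsign.filter_mono nhdsWithin_le_nhds).and
    (Ioo_mem_nhdsLT harc.lt)).exists
  rw [sign_pos (harc.pos x hxab), sign_neg (sub_neg.2 hxab.2)] at hx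
  exact absurd hx (by decide)

theorem eq_right_of_common_point (h : IsClockwiseLoop u w w' u₀ Z) {s₁ t₁ s₂ t₂ x y : ℝ}
    (h₁ : IsUpperArc w s₁ t₁) (h₂ : IsUpperArc w s₂ t₂) (hx : x ∈ Icc s₁ t₁) (hy : y ∈ Icc s₂ t₂)
    (hu : u x = u y) (hw : w x = w y) : u t₁ = u t₂ := by
  wlog hle : t₁ - x ≤ t₂ - y generalizing s₁ t₁ s₂ t₂ x y
  · exact (this h₂ h₁ hy hx hu.symm hw.symm (le_of_not_ge hle)).symm
  obtain ⟨hut, hwt⟩ := h.autonomous hu hw (t₁ - x)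
  rw [add_sub_cancel] at hut hwt
  rw [h₁.right] at hwt
  rcases hle.eq_or_lt with heq | hlt
  · rw [hut, heq, add_sub_cancel]
  have hstart : y + (t₁ - x) = s₂ := by
    by_contra hne
    have hmem : y + (t₁ - x) ∈ Ioo s₂ t₂ :=
      ⟨lt_of_le_of_ne (by linarith [hx.2, hy.1]) (Ne.symm hne), by linarith⟩
    exact (h₂.pos _ hmem).ne hwt
  rw [hstart] at hut
  exact absurd hut ((h.upperArc_left_lt h₂).trans (h.upperArc_lt_right h₁)).ne'

theorem exists_upperArc_min_to_max (h : IsClockwiseLoop u w w' u₀ Z) {m M : ℝ}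
    (hm : ∀ t, u m ≤ u t) (hM : ∀ t, u t ≤ u M) :
    ∃ b, IsUpperArc w m b ∧ u b = u M := by
  have hwm : w m = 0 := IsLocalMin.hasDerivAt_eq_zero (.of_forall hm) (h.hasDerivAt_fst m)
  have hwM : w M = 0 := IsLocalMax.hasDerivAt_eq_zero (.of_forall hM) (h.hasDerivAt_fst M)
  have hum : u m < u₀ := by
    refine ((h.crossing m hwm).resolve_right fun H => ?_).1
    obtain ⟨a, ha⟩ := h.exists_upperArc_to hwm H.1
    exact (hm a).not_gt (ha.strictMonoOn h.hasDerivAt_fst (left_mem_Icc.2 ha.lt.le)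
      (right_mem_Icc.2 ha.lt.le) ha.lt)
  have huM : u₀ < u M := by
    refine ((h.crossing M hwM).resolve_left fun H => ?_).1
    obtain ⟨b, hb⟩ := h.exists_upperArc_from hwM H.1
    exact (hM b).not_gt (hb.strictMonoOn h.hasDerivAt_fst (left_mem_Icc.2 hb.lt.le)
      (right_mem_Icc.2 hb.lt.le) hb.lt)
  obtain ⟨b, hb⟩ := h.exists_upperArc_from hwm hum
  obtain ⟨a, ha⟩ := h.exists_upperArc_to hwM huM
  have hab : u a ≤ u b := ((h.upperArc_left_lt ha).trans (h.upperArc_lt_right hb)).le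
  obtain ⟨x, hx, y, hy, huxy, hwxy⟩ := IsUpperArc.exists_common_point h.continuous_snd
    h.hasDerivAt_fst hb ha (hm a) hab (hM b)
  exact ⟨b, hb, h.eq_right_of_common_point hb ha hx hy huxy hwxy⟩

/-- The lower arc, which ends at time `m`, and the upper arc, which starts there, close up to one
full turn, and by periodicity every zero of `w` has a copy on it. -/
theorem eq_left_or_eq_right_of_closed_arcs (h : IsClockwiseLoop u w w' u₀ Z) {m : ℝ}
    (ha : IsUpperArc (fun t => -w (-t)) (-m) a) (hb : IsUpperArc w m b) (hab : u (-a) = u b)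
    (hs : w s = 0) : u s = u m ∨ u s = u b := by
  have hwa : w (-a) = 0 := neg_eq_zero.1 ha.right
  have ham : -a < m := neg_lt.1 ha.lt
  have hturn : Function.Periodic (fun t => (u t, w t)) (b - -a) := fun t => by
    have := h.autonomous hab (hwa.trans hb.right.symm) (t - -a)
    rw [add_sub_cancel, show b + (t - -a) = t + (b - -a) by ring] at this
    exact Prod.ext this.1.symm this.2.symm
  obtain ⟨x, hx, hsx⟩ := hturn.exists_mem_Ico (sub_pos.2 (ham.trans hb.lt)) s (-a)
  obtain ⟨hux, hwx⟩ := Prod.ext_iff.1 hsx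
  dsimp only at hux hwx
  rw [hux]
  rw [add_sub_cancel] at hx
  have hlower (hax : -a < x) : ¬ x < m := fun hxm => by
    have := ha.pos (-x) ⟨neg_lt_neg hxm, neg_lt.1 hax⟩
    rw [neg_neg, ← hwx, hs, neg_zero] at this
    exact this.false
  have hupper : ¬ m < x := fun hmx => (hb.pos x ⟨hmx, hx.2⟩).ne (hs.symm.trans hwx)
  rcases hx.1.eq_or_lt with rfl | hax
  · exact .inr hab
  · exact .inl (congrArg u (le_antisymm (not_lt.1 hupper) (not_lt.1 (hlower hax))))

theorem eq_of_zeros_same_side (h : IsClockwiseLoop u w w' u₀ Z) (hs : w s = 0) (ht : w t = 0)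
    (hside : 0 < (u s - u₀) * (u t - u₀)) : u s = u t := by
  obtain ⟨m, M, hm, hM⟩ := exists_min_max_of_periodic (fun t => (h.periodic t).1)
    h.period_pos h.continuous_fst
  obtain ⟨b, hb, hbM⟩ := h.exists_upperArc_min_to_max hm hM
  obtain ⟨a, ha, haM⟩ := h.reflect.exists_upperArc_min_to_max (m := -m) (M := -M)
    (fun t => by simpa using hm (-t)) fun t => by simpa using hM (-t)
  have hab : u (-a) = u b := haM.trans (by simpa using hbM.symm)
  have hum := h.upperArc_left_lt hb
  have hub := h.upperArc_lt_right hb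
  rcases h.eq_left_or_eq_right_of_closed_arcs ha hb hab hs with hs' | hs' <;>
    rcases h.eq_left_or_eq_right_of_closed_arcs ha hb hab ht with ht' | ht' <;>
      rw [hs', ht'] at hside ⊢
  · nlinarith
  · nlinarith

end IsClockwiseLoop

/-! ### Damped periodic motions in a potential well are constant -/

theorem forall_lt_of_forall_le_imp_lt {φ : ℝ → ℝ} {a b M : ℝ} (hφ : ContinuousOn φ (Icc a b))
    (ha : φ a < M) (h : ∀ t ∈ Icc a b, (∀ s ∈ Icc a t, φ s ≤ M) → φ t < M) :
    ∀ t ∈ Icc a b, φ t < M := by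
  by_contra! hex
  obtain ⟨t, ht, htM⟩ := hex
  obtain ⟨t₁, ⟨ht₁, hM⟩, hleast⟩ := (isCompact_Icc.of_isClosed_subset
    (hφ.preimage_isClosed_of_isClosed isClosed_Icc isClosed_Ici) inter_subset_left).exists_isLeast
    (⟨t, ht, htM⟩ : (Icc a b ∩ φ ⁻¹' Ici M).Nonempty)
  have hbefore (s : ℝ) (hs : s ∈ Ico a t₁) : φ s < M := by
    by_contra! hsM
    exact (hleast ⟨⟨hs.1, hs.2.le.trans ht₁.2⟩, hsM⟩).not_gt hs.2
  obtain ⟨x, hx, hxM⟩ := intermediate_value_Icc ht₁.1 (hφ.mono (Icc_subset_Icc_right ht₁.2))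
    ⟨ha.le, hM⟩
  have hxt : x = t₁ := le_antisymm hx.2 (hleast ⟨⟨hx.1, hx.2.trans ht₁.2⟩, hxM.ge⟩)
  refine (h t₁ ht₁ fun s hs => ?_).not_ge hM
  rcases hs.2.eq_or_lt with rfl | hlt
  · exact (hxt ▸ hxM).le
  · exact (hbefore s ⟨hs.1, hlt⟩).le

/-- `G` is a potential for the force field `Φ` on `[u₀ - r, u₀ + r]`, in the sense `G' = Φ`, and
the level `G q` of the point `q` is above the levels of both endpoints: in the potential energy `-G`
the point `q` lies below the rim of the well. -/
structure IsPotentialWell (Φ G : ℝ → ℝ) (u₀ r q : ℝ) : Prop where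
  hasDerivAt : ∀ x, |x - u₀| ≤ r → HasDerivAt G (Φ x) x
  mem : |q - u₀| < r
  left : G (u₀ - r) < G q
  right : G (u₀ + r) < G q

theorem lt_of_hasDerivAt_of_sign_eq {Φ G : ℝ → ℝ} {u₀ x : ℝ}
    (hG : ∀ y ∈ uIcc u₀ x, HasDerivAt G (Φ y) y)
    (hsign : ∀ y ∈ uIcc u₀ x, SignType.sign (Φ y) = SignType.sign (u₀ - y)) (hx : x ≠ u₀) :
    G x < G u₀ := by
  rcases hx.lt_or_gt with hlt | hlt
  · rw [uIcc_of_ge hlt.le] at hG hsign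
    refine strictMonoOn_of_hasDerivWithinAt_pos (f' := Φ) (convex_Icc x u₀)
      (fun y hy => (hG y hy).continuousAt.continuousWithinAt)
      (fun y hy => (hG y (interior_subset hy)).hasDerivWithinAt) (fun y hy => ?_)
      (left_mem_Icc.2 hlt.le) (right_mem_Icc.2 hlt.le) hlt
    rw [interior_Icc] at hy
    rw [← sign_eq_one_iff, hsign y (Ioo_subset_Icc_self hy), sign_pos (sub_pos.2 hy.2)]
  · rw [uIcc_of_le hlt.le] at hG hsign
    refine strictAntiOn_of_hasDerivWithinAt_neg (f' := Φ) (convex_Icc u₀ x)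
      (fun y hy => (hG y hy).continuousAt.continuousWithinAt)
      (fun y hy => (hG y (interior_subset hy)).hasDerivWithinAt) (fun y hy => ?_)
      (left_mem_Icc.2 hlt.le) (right_mem_Icc.2 hlt.le) hlt
    rw [interior_Icc] at hy
    rw [← sign_eq_neg_one_iff, hsign y (Ioo_subset_Icc_self hy), sign_neg (sub_neg.2 hy.1)]

theorem exists_isPotentialWell {Φ : ℝ → ℝ} {u₀ r₀ : ℝ} (hc : ∀ᶠ x in 𝓝 u₀, ContinuousAt Φ x)
    (hsign : ∀ᶠ x in 𝓝 u₀, SignType.sign (Φ x) = SignType.sign (u₀ - x)) (hr₀ : 0 < r₀) :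
    ∃ r ≤ r₀, ∃ G, ∃ δ > 0, ∀ q, |q - u₀| < δ → IsPotentialWell Φ G u₀ r q := by
  obtain ⟨ρ, hρ, hball⟩ := Metric.eventually_nhds_iff_ball.1 (hc.and hsign)
  have hr : 0 < min r₀ (ρ / 2) := lt_min hr₀ (half_pos hρ)
  have hrρ : min r₀ (ρ / 2) < ρ := (min_le_right _ _).trans_lt (half_lt_self hρ)
  refine ⟨min r₀ (ρ / 2), min_le_left _ _, ?_⟩
  generalize min r₀ (ρ / 2) = r at hr hrρ
  have hmem {x : ℝ} (hx : |x - u₀| ≤ r) : x ∈ Metric.ball u₀ ρ := hx.trans_lt hrρ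
  have hcont : ContinuousOn Φ (Metric.ball u₀ ρ) := fun x hx => (hball x hx).1.continuousWithinAt
  have hderiv (x : ℝ) (hx : |x - u₀| ≤ r) : HasDerivAt (fun x => ∫ y in u₀..x, Φ y) (Φ x) x :=
    intervalIntegral.integral_hasDerivAt_right
      (hcont.mono ((convex_ball u₀ ρ).ordConnected.uIcc_subset (Metric.mem_ball_self hρ)
        (hmem hx))).intervalIntegrable
      (hcont.stronglyMeasurableAtFilter Metric.isOpen_ball x (hmem hx)) (hball x (hmem hx)).1
  generalize (fun x => ∫ y in u₀..x, Φ y) = G at hderiv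
  have hmax {x : ℝ} (hx : |x - u₀| = r) : G x < G u₀ := by
    have hle (y : ℝ) (hy : y ∈ uIcc u₀ x) : |y - u₀| ≤ r := hx ▸ abs_sub_left_of_mem_uIcc hy
    refine lt_of_hasDerivAt_of_sign_eq (fun y hy => hderiv y (hle y hy))
      (fun y hy => (hball y (hmem (hle y hy))).2) fun hxu => hr.ne ?_
    rw [← hx, hxu, sub_self, abs_zero]
  have hGc : ContinuousAt G u₀ := (hderiv u₀ (by simpa using hr.le)).continuousAt
  obtain ⟨δ, hδ, hlevel⟩ := Metric.eventually_nhds_iff.1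
    ((hGc.eventually_const_lt (hmax (x := u₀ - r) (by simp [abs_of_pos hr]))).and
      (hGc.eventually_const_lt (hmax (x := u₀ + r) (by simp [abs_of_pos hr]))))
  exact ⟨G, min δ r, lt_min hδ hr, fun q hq => ⟨hderiv, hq.trans_le (min_le_right _ _),
    (hlevel (hq.trans_le (min_le_left _ _))).1, (hlevel (hq.trans_le (min_le_left _ _))).2⟩⟩

section DampedMotion

variable {u w Φ G e : ℝ → ℝ} {u₀ r T Z : ℝ}

theorem hasDerivAt_energy {t : ℝ} (hu : HasDerivAt u (w t) t)
    (hw : HasDerivAt w (Φ (u t) + e t * w t) t) (hG : HasDerivAt G (Φ (u t)) (u t)) :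
    HasDerivAt (fun t => w t ^ 2 / 2 - G (u t)) (e t * w t ^ 2) t :=
  (((hw.fun_pow 2).div_const 2).fun_sub (hG.comp t hu)).congr_deriv (by push_cast; ring)

theorem energy_antitoneOn (hu : ∀ t, HasDerivAt u (w t) t)
    (hw : ∀ t, HasDerivAt w (Φ (u t) + e t * w t) t)
    (hG : ∀ x, |x - u₀| ≤ r → HasDerivAt G (Φ x) x) (he : ∀ t, |u t - u₀| ≤ r → e t ≤ 0)
    (hT : ∀ t ∈ Icc 0 T, |u t - u₀| ≤ r) :
    AntitoneOn (fun t => w t ^ 2 / 2 - G (u t)) (Icc 0 T) := by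
  have hd : ∀ t ∈ Icc 0 T, HasDerivAt (fun t => w t ^ 2 / 2 - G (u t)) (e t * w t ^ 2) t :=
    fun t ht => hasDerivAt_energy (hu t) (hw t) (hG _ (hT t ht))
  exact antitoneOn_of_hasDerivWithinAt_nonpos (convex_Icc 0 T)
    (fun t ht => (hd t ht).continuousAt.continuousWithinAt)
    (fun t ht => (hd t (interior_subset ht)).hasDerivWithinAt)
    fun t ht => mul_nonpos_of_nonpos_of_nonneg (he t (hT t (interior_subset ht))) (sq_nonneg _)

theorem IsPotentialWell.forall_mem_of_damped (hwell : IsPotentialWell Φ G u₀ r (u 0))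
    (hu : ∀ t, HasDerivAt u (w t) t) (hw : ∀ t, HasDerivAt w (Φ (u t) + e t * w t) t)
    (hw₀ : w 0 = 0) (he : ∀ t, |u t - u₀| ≤ r → e t ≤ 0) (t : ℝ) (ht : 0 ≤ t) :
    |u t - u₀| < r := by
  refine forall_lt_of_forall_le_imp_lt (φ := fun t => |u t - u₀|)
    (fun s _ => ((hu s).continuousAt.sub continuousAt_const).abs.continuousWithinAt) hwell.mem
    (fun s hs hle => ?_) t (right_mem_Icc.2 ht)
  have henergy := energy_antitoneOn hu hw hwell.hasDerivAt he hle (left_mem_Icc.2 hs.1)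
    (right_mem_Icc.2 hs.1) hs.1
  have hlevel : G (u 0) ≤ G (u s) := by
    simp only [hw₀] at henergy
    nlinarith [sq_nonneg (w s)]
  refine (hle s (right_mem_Icc.2 hs.1)).lt_of_ne fun heq => ?_
  rcases eq_or_eq_neg_of_abs_eq heq with h | h
  · rw [sub_eq_iff_eq_add'.1 h] at hlevel
    exact hwell.right.not_ge hlevel
  · rw [sub_eq_iff_eq_add'.1 h, ← sub_eq_add_neg] at hlevel
    exact hwell.left.not_ge hlevel

/-- The energy decreases and is periodic, hence constant, so its dissipation rate `e w²` is `0`. -/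
theorem IsPotentialWell.not_nonconst_of_damped_of_periodic (hwell : IsPotentialWell Φ G u₀ r (u 0))
    (hu : ∀ t, HasDerivAt u (w t) t) (hw : ∀ t, HasDerivAt w (Φ (u t) + e t * w t) t)
    (hw₀ : w 0 = 0) (he : ∀ t, |u t - u₀| ≤ r → e t < 0) (hZ : 0 < Z)
    (hper : ∀ t, u (t + Z) = u t ∧ w (t + Z) = w t) : ¬ Nonconst u w := by
  have hmem := hwell.forall_mem_of_damped hu hw hw₀ fun t ht => (he t ht).le
  have hanti := energy_antitoneOn (T := Z + Z) hu hw hwell.hasDerivAt (fun t ht => (he t ht).le)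
    fun t ht => (hmem t ht.1).le
  have hend : w (Z + Z) ^ 2 / 2 - G (u (Z + Z)) = w 0 ^ 2 / 2 - G (u 0) := by
    have h0 := hper 0
    rw [zero_add] at h0
    rw [(hper Z).1, (hper Z).2, h0.1, h0.2]
  have hconst (t : ℝ) (ht : t ∈ Icc 0 (Z + Z)) :
      w t ^ 2 / 2 - G (u t) = w 0 ^ 2 / 2 - G (u 0) :=
    le_antisymm (hanti ⟨le_rfl, by positivity⟩ ht ht.1)
      (hend ▸ hanti ht ⟨by positivity, le_rfl⟩ ht.2)
  have hrest (t : ℝ) (ht : t ∈ Ioo 0 (Z + Z)) : w t = 0 := by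
    have hderiv := hasDerivAt_energy (hu t) (hw t) (hwell.hasDerivAt _ (hmem t ht.1.le).le)
    have hzero := (hasDerivAt_const t (w 0 ^ 2 / 2 - G (u 0))).congr_of_eventuallyEq
      (mem_of_superset (Ioo_mem_nhds ht.1 ht.2) fun x hx => hconst x (Ioo_subset_Icc_self hx))
    have hmul := hderiv.unique hzero
    exact pow_eq_zero_iff two_ne_zero |>.1
      ((mul_eq_zero.1 hmul).resolve_left (he t (hmem t ht.1.le).le).ne)
  have hw0 (t : ℝ) : w t = 0 := by
    obtain ⟨y, hy, hty⟩ := Function.Periodic.exists_mem_Ico (fun t => (hper t).2) hZ t (Z / 2)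
    rw [hty]
    exact hrest y ⟨by linarith [hy.1], by linarith [hy.2]⟩
  rintro ⟨z, hz⟩
  have hconst_u := is_const_of_deriv_eq_zero (fun t => (hu t).differentiableAt)
    (fun t => (hu t).deriv.trans (hw0 t)) z 0
  simp [hconst_u, hw0] at hz

end DampedMotion

/-! ### Perturbed rotations -/

section Rotation

open Complex

variable {ζ N : ℝ → ℂ} {ω η R T : ℝ}

theorem hasDerivAt_exp_mul {t : ℝ} (hζ : HasDerivAt ζ (-(ω * I) * ζ t + N t) t) :
    HasDerivAt (fun t : ℝ => exp ((ω * t : ℝ) * I) * ζ t) (exp ((ω * t : ℝ) * I) * N t) t := by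
  have hexp : HasDerivAt (fun t : ℝ => exp ((ω * t : ℝ) * I)) (exp ((ω * t : ℝ) * I) * (ω * I)) t :=
    by simpa using ((((hasDerivAt_id t).const_mul ω).ofReal_comp).mul_const I).cexp
  exact (hexp.mul hζ).congr_deriv (by ring)

theorem norm_exp_mul_sub_le_of_near_rotation
    (hζ : ∀ t, HasDerivAt ζ (-(ω * I) * ζ t + N t) t)
    (hN : ∀ t, ‖ζ t‖ ≤ R → ‖N t‖ ≤ η * ‖ζ t‖) (hη : 0 ≤ η) (hR : 2 * ‖ζ 0‖ ≤ R) {t : ℝ}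
    (ht : 0 ≤ t) (hle : ∀ s ∈ Icc 0 t, ‖ζ s‖ ≤ 2 * ‖ζ 0‖) :
    ‖exp ((ω * t : ℝ) * I) * ζ t - ζ 0‖ ≤ 2 * η * t * ‖ζ 0‖ := by
  have hbound : ∀ s ∈ Icc 0 t, ‖exp ((ω * s : ℝ) * I) * N s‖ ≤ η * (2 * ‖ζ 0‖) := fun s hs => by
    rw [norm_mul, norm_exp_ofReal_mul_I, one_mul]
    exact (hN s ((hle s hs).trans hR)).trans (mul_le_mul_of_nonneg_left (hle s hs) hη)
  have h := (convex_Icc 0 t).norm_image_sub_le_of_norm_hasDerivWithin_le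
    (fun s _ => (hasDerivAt_exp_mul (hζ s)).hasDerivWithinAt) hbound (left_mem_Icc.2 ht)
    (right_mem_Icc.2 ht)
  simp only [mul_zero, ofReal_zero, zero_mul, exp_zero, one_mul, sub_zero, Real.norm_eq_abs,
    abs_of_nonneg ht] at h
  linarith

theorem norm_lt_of_near_rotation
    (hζ : ∀ t, HasDerivAt ζ (-(ω * I) * ζ t + N t) t)
    (hN : ∀ t, ‖ζ t‖ ≤ R → ‖N t‖ ≤ η * ‖ζ t‖) (hη : 0 ≤ η) (hR : 2 * ‖ζ 0‖ ≤ R)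
    (hζ₀ : ζ 0 ≠ 0) (hT : 2 * η * T < 1) : ∀ t ∈ Icc 0 T, ‖ζ t‖ < 2 * ‖ζ 0‖ := by
  have hpos : 0 < ‖ζ 0‖ := norm_pos_iff.2 hζ₀
  refine forall_lt_of_forall_le_imp_lt (φ := fun t => ‖ζ t‖)
    (fun t _ => (hζ t).continuousAt.norm.continuousWithinAt) (by linarith) fun t ht hle => ?_
  have hdrift := norm_exp_mul_sub_le_of_near_rotation hζ hN hη hR ht.1 hle
  have hsmall : 2 * η * t < 1 :=
    (mul_le_mul_of_nonneg_left ht.2 (by positivity)).trans_lt hT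
  calc ‖ζ t‖ = ‖exp ((ω * t : ℝ) * I) * ζ t‖ := by
        rw [norm_mul, norm_exp_ofReal_mul_I, one_mul]
    _ ≤ ‖exp ((ω * t : ℝ) * I) * ζ t - ζ 0‖ + ‖ζ 0‖ := by
        simpa using norm_add_le (exp ((ω * t : ℝ) * I) * ζ t - ζ 0) (ζ 0)
    _ ≤ 2 * η * t * ‖ζ 0‖ + ‖ζ 0‖ := by gcongr
    _ < 2 * ‖ζ 0‖ := by nlinarith

theorem norm_div_sub_exp_le_of_near_rotation
    (hζ : ∀ t, HasDerivAt ζ (-(ω * I) * ζ t + N t) t)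
    (hN : ∀ t, ‖ζ t‖ ≤ R → ‖N t‖ ≤ η * ‖ζ t‖) (hη : 0 ≤ η) (hR : 2 * ‖ζ 0‖ ≤ R)
    (hζ₀ : ζ 0 ≠ 0) (hT : 2 * η * T < 1) {t : ℝ} (ht : t ∈ Icc 0 T) :
    ‖ζ t / ζ 0 - exp ((-(ω * t) : ℝ) * I)‖ ≤ 2 * η * t := by
  have hle : ∀ s ∈ Icc 0 t, ‖ζ s‖ ≤ 2 * ‖ζ 0‖ := fun s hs =>
    (norm_lt_of_near_rotation hζ hN hη hR hζ₀ hT s ⟨hs.1, hs.2.trans ht.2⟩).le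
  have hdrift := norm_exp_mul_sub_le_of_near_rotation hζ hN hη hR ht.1 hle
  have hfactor : ζ t / ζ 0 - exp ((-(ω * t) : ℝ) * I) =
      exp ((-(ω * t) : ℝ) * I) * (exp ((ω * t : ℝ) * I) * ζ t - ζ 0) / ζ 0 := by
    rw [mul_sub, ← mul_assoc, ← exp_add, ofReal_neg, neg_mul, neg_add_cancel, exp_zero, one_mul,
      sub_div, mul_div_cancel_right₀ _ hζ₀]
  rw [hfactor, norm_div, norm_mul, norm_exp_ofReal_mul_I, one_mul]
  exact (div_le_iff₀ (norm_pos_iff.2 hζ₀)).2 hdrift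

/-- Intermediate values: `z` turns clockwise, so it lies above the real axis just before the full
turn and below it just after. -/
theorem exists_im_eq_zero_of_near_rotation {z : ℝ → ℂ} {α : ℝ} (hz : Continuous z) (hα : 0 < α)
    (hαπ : α ≤ Real.pi / 3)
    (hclose : ∀ θ ∈ Icc (2 * Real.pi - α) (2 * Real.pi + α),
      ‖z θ - exp ((-θ : ℝ) * I)‖ ≤ min (Real.sin α) (1 / 4)) :
    ∃ θ ∈ Icc (2 * Real.pi - α) (2 * Real.pi + α), (z θ).im = 0 ∧ 0 < (z θ).re := by
  have hle : 2 * Real.pi - α ≤ 2 * Real.pi + α := by linarith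
  have him (θ : ℝ) (hθ : θ ∈ Icc (2 * Real.pi - α) (2 * Real.pi + α)) :
      |(z θ).im + Real.sin θ| ≤ Real.sin α := by
    have h := (abs_im_le_norm _).trans ((hclose θ hθ).trans (min_le_left _ _))
    rwa [sub_im, exp_ofReal_mul_I_im, Real.sin_neg, sub_neg_eq_add] at h
  have hbefore : 0 ≤ (z (2 * Real.pi - α)).im := by
    have h := him _ (left_mem_Icc.2 hle)
    rw [Real.sin_two_pi_sub] at h
    linarith [(abs_le.1 h).1]
  have hafter : (z (2 * Real.pi + α)).im ≤ 0 := by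
    have h := him _ (right_mem_Icc.2 hle)
    rw [add_comm (2 * Real.pi), Real.sin_add_two_pi] at h
    rw [add_comm]
    linarith [(abs_le.1 h).2]
  obtain ⟨θ, hθ, hzθ⟩ := intermediate_value_Icc' hle (continuous_im.comp hz).continuousOn
    ⟨hafter, hbefore⟩
  have hcos : 1 / 2 ≤ Real.cos θ := by
    have habs : |θ - 2 * Real.pi| ≤ α := abs_le.2 ⟨by linarith [hθ.1], by linarith [hθ.2]⟩
    rw [← Real.cos_sub_two_pi, ← Real.cos_pi_div_three, ← Real.cos_abs (θ - _)]
    exact Real.cos_le_cos_of_nonneg_of_le_pi (abs_nonneg _) (by linarith [Real.pi_pos])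
      (by linarith)
  have hre := (abs_re_le_norm _).trans ((hclose θ hθ).trans (min_le_right _ _))
  rw [sub_re, exp_ofReal_mul_I_re, Real.cos_neg] at hre
  exact ⟨θ, hθ, hzθ, by linarith [(abs_le.1 hre).1]⟩

theorem exists_return_of_near_rotation {ε : ℝ} (hω : 0 < ω) (hε : 0 < ε) :
    ∃ κ > 0, ∀ z : ℝ → ℂ, Continuous z →
      (∀ t ∈ Icc 0 (2 * Real.pi / ω + ε), ‖z t - exp ((-(ω * t) : ℝ) * I)‖ ≤ κ) →
      ∃ t > 0, |t - 2 * Real.pi / ω| ≤ ε ∧ (z t).im = 0 ∧ 0 < (z t).re := by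
  obtain ⟨α, hα, hαlt⟩ : ∃ α, 0 < α ∧ α < min (ω * ε) (Real.pi / 3) :=
    exists_between (by positivity)
  have hαε : α < ω * ε := hαlt.trans_le (min_le_left _ _)
  have hαπ : α < Real.pi / 3 := hαlt.trans_le (min_le_right _ _)
  have hsin : 0 < Real.sin α := Real.sin_pos_of_pos_of_lt_pi hα (by linarith [Real.pi_pos])
  refine ⟨min (Real.sin α) (1 / 4), by positivity, fun z hz hclose => ?_⟩
  have hnear (θ : ℝ) (hθ : θ ∈ Icc (2 * Real.pi - α) (2 * Real.pi + α)) :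
      |θ / ω - 2 * Real.pi / ω| ≤ ε := by
    rw [← sub_div, abs_div, abs_of_pos hω, div_le_iff₀' hω]
    exact abs_le.2 ⟨by linarith [hθ.1], by linarith [hθ.2]⟩
  have hpos (θ : ℝ) (hθ : θ ∈ Icc (2 * Real.pi - α) (2 * Real.pi + α)) : 0 < θ / ω :=
    div_pos (by linarith [hθ.1, Real.pi_pos]) hω
  obtain ⟨θ, hθ, him, hre⟩ := exists_im_eq_zero_of_near_rotation (z := fun θ => z (θ / ω))
    (hz.comp (continuous_id.div_const ω)) hα hαπ.le fun θ hθ => by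
      have h := hclose (θ / ω) ⟨(hpos θ hθ).le, by linarith [(abs_le.1 (hnear θ hθ)).2]⟩
      rwa [mul_div_cancel₀ _ hω.ne'] at h
  exact ⟨θ / ω, hpos θ hθ, hnear θ hθ, him, hre⟩

theorem exists_lt_of_norm_exp_sub_one_le {ε : ℝ} (hω : 0 < ω) (hε : 0 < ε) :
    ∃ κ > 0, ∀ Z > 0, ‖1 - exp ((-(ω * Z) : ℝ) * I)‖ ≤ κ * Z → 2 * Real.pi / ω - ε < Z := by
  rcases le_or_gt (2 * Real.pi / ω) ε with hle | hlt
  · exact ⟨1, one_pos, fun Z hZ _ => by linarith⟩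
  set a := Real.pi - ω * ε / 2 with ha
  have ha0 : 0 < a := by
    have := (lt_div_iff₀ hω).1 hlt
    linarith
  have haπ : a < Real.pi := by
    have := mul_pos hω hε
    linarith
  have hsin : 0 < Real.sin a := Real.sin_pos_of_pos_of_lt_pi ha0 haπ
  refine ⟨ω * (Real.sin a / a) / 2, by positivity, fun Z hZ hnorm => ?_⟩
  by_contra! hZle
  have hx : ω * Z / 2 ≤ a := by
    have := mul_le_mul_of_nonneg_left hZle hω.le
    rw [mul_sub, mul_div_cancel₀ _ hω.ne'] at this
    linarith
  have hchord : Real.sin a / a * (ω * Z / 2) ≤ Real.sin (ω * Z / 2) := by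
    have hratio : 0 ≤ ω * Z / 2 / a := by positivity
    obtain ⟨-, hconcave⟩ := strictConcaveOn_sin_Icc.concaveOn
    have h := hconcave (left_mem_Icc.2 Real.pi_pos.le) ⟨ha0.le, haπ.le⟩
      (sub_nonneg.2 ((div_le_one ha0).2 hx)) hratio (sub_add_cancel _ _)
    simp only [smul_eq_mul, Real.sin_zero, mul_zero, zero_add, div_mul_cancel₀ _ ha0.ne'] at h
    calc Real.sin a / a * (ω * Z / 2) = ω * Z / 2 / a * Real.sin a := by ring
      _ ≤ _ := h
  have hsin_le : 2 * Real.sin (ω * Z / 2) ≤ ω * (Real.sin a / a) / 2 * Z := by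
    refine (le_abs_self _).trans (le_of_eq_of_le ?_ hnorm)
    rw [norm_sub_rev, mul_comm _ I, norm_exp_I_mul_ofReal_sub_one, neg_div, Real.sin_neg, mul_neg,
      norm_neg, Real.norm_eq_abs]
  have : 0 < ω * (Real.sin a / a) * Z := by positivity
  linarith

end Rotation

/-! ### Liénard equations near a center -/

section PhasePoint

variable {u w : ℝ → ℝ} {u₀ ω Z : ℝ}

/-- The phase point `(x, y)` as a complex number, scaled such that the flow of the linear
oscillator `u'' = -ω² (u - u₀)` is the rotation with angular velocity `-ω`. -/
def phasePoint (ω u₀ x y : ℝ) : ℂ := ⟨ω * (x - u₀), y⟩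

theorem mul_abs_sub_le_norm_phasePoint (hω : 0 < ω) (x y : ℝ) :
    ω * |x - u₀| ≤ ‖phasePoint ω u₀ x y‖ := by
  simpa [phasePoint, abs_mul, abs_of_pos hω] using (phasePoint ω u₀ x y).abs_re_le_norm

theorem hasDerivAt_phasePoint {F : ℝ × ℝ → ℝ} (hcurve : IsPhaseCurve F u w) (t : ℝ) :
    HasDerivAt (fun t => phasePoint ω u₀ (u t) (w t)) (-(ω * Complex.I) *
      phasePoint ω u₀ (u t) (w t) + (F (u t, w t) + ω ^ 2 * (u t - u₀) : ℝ) * Complex.I) t := by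
  have hform : (fun t => phasePoint ω u₀ (u t) (w t)) =
      fun t => ((ω * (u t - u₀) : ℝ) : ℂ) + (w t : ℝ) * Complex.I :=
    funext fun t => Complex.mk_eq_add_mul_I _ _
  rw [hform]
  refine (((((hcurve.1 t).sub_const u₀).const_mul ω).ofReal_comp).add
    ((hcurve.2 t).ofReal_comp.mul_const Complex.I)).congr_deriv ?_
  apply Complex.ext <;> simp [phasePoint, sq]
  ring

theorem IsClockwiseLoop.periodic_of_im_div_eq_zero {w' : ℝ → ℝ} {t : ℝ}
    (h : IsClockwiseLoop u w w' u₀ Z) (hω : 0 < ω) (hw₀ : w 0 = 0)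
    (him : (phasePoint ω u₀ (u t) (w t) / phasePoint ω u₀ (u 0) 0).im = 0)
    (hre : 0 < (phasePoint ω u₀ (u t) (w t) / phasePoint ω u₀ (u 0) 0).re) (s : ℝ) :
    u (s + t) = u s ∧ w (s + t) = w s := by
  have hne : u 0 - u₀ ≠ 0 := sub_ne_zero.2 (h.ne_of_eq_zero hw₀)
  have hbase : phasePoint ω u₀ (u 0) 0 = ((ω * (u 0 - u₀) : ℝ) : ℂ) := rfl
  rw [hbase, Complex.div_ofReal_im] at him
  rw [hbase, Complex.div_ofReal_re] at hre
  have hwt : w t = 0 := (div_eq_zero_iff.1 him).resolve_right (mul_ne_zero hω.ne' hne)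
  have hratio : 0 < (u t - u₀) / (u 0 - u₀) := by
    rwa [← mul_div_mul_left _ _ hω.ne']
  have hut : u t = u 0 := h.eq_of_zeros_same_side hwt hw₀ (mul_pos_iff.2 (div_pos_iff.1 hratio))
  simpa [add_comm] using h.autonomous hut (hwt.trans hw₀.symm) s

end PhasePoint

theorem nonneg_of_isLocalMin_of_hasDerivAt {u w : ℝ → ℝ} {d m : ℝ} (hmin : IsLocalMin u m)
    (hu : ∀ t, HasDerivAt u (w t) t) (hw : HasDerivAt w d m) : 0 ≤ d := by
  by_contra! hd
  have hderiv : deriv u = w := funext fun t => (hu t).deriv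
  have hmax : IsLocalMax u m := isLocalMax_of_deriv_deriv_neg (by rwa [hderiv, hw.deriv])
    ((hu m).deriv.trans (hmin.hasDerivAt_eq_zero (hu m))) (hu m).continuousAt
  have hconst : u =ᶠ[𝓝 m] fun _ => u m := by
    filter_upwards [hmin, hmax] with t ht ht' using le_antisymm ht' ht
  have hwzero : w =ᶠ[𝓝 m] fun _ => 0 := by
    simpa [hderiv] using hconst.deriv
  exact hd.ne (hw.unique ((hasDerivAt_const m 0).congr_of_eventuallyEq hwzero))

/-- The right-hand side of the Liénard equation `u'' = Φ(u) + b(u) (p(u) + μ) u'` with parameter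
`μ`, at the phase point `y = (u, u')`. -/
def lienardForce (Φ b p : ℝ → ℝ) (μ : ℝ) (y : ℝ × ℝ) : ℝ :=
  Φ y.1 + b y.1 * (p y.1 + μ) * y.2

/-- The Liénard equation `u'' = Φ(u) + b(u) (p(u) + μ) u'` on the interval `I` has the equilibrium
`u₀`, whose linearization at the parameter value `μ = -p(u₀)` is a center with frequency `ω`. By
`downcrossing` an interval at whose ends the force points inwards contains no other equilibrium. -/
structure IsLienardCenter (Φ b p : ℝ → ℝ) (I : Set ℝ) (u₀ ω : ℝ) : Prop where
  isOpen : IsOpen I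
  mem : u₀ ∈ I
  contDiffOn_force : ContDiffOn ℝ 1 Φ I
  contDiffOn_weight : ContDiffOn ℝ 1 b I
  contDiffOn_profile : ContDiffOn ℝ 1 p I
  weight_pos : ∀ x ∈ I, 0 < b x
  frequency_pos : 0 < ω
  force_eq_zero : Φ u₀ = 0
  hasDerivAt_force : HasDerivAt Φ (-ω ^ 2) u₀
  downcrossing : ∀ a ∈ I, ∀ b ∈ I, 0 < Φ a → Φ b < 0 → ∀ x ∈ Icc a b,
    SignType.sign (Φ x) = SignType.sign (u₀ - x)

namespace IsLienardCenter

variable {Φ b p u w : ℝ → ℝ} {I : Set ℝ} {u₀ ω μ Z : ℝ}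

theorem locallyLipschitzOn_lienardForce (h : IsLienardCenter Φ b p I u₀ ω) (μ : ℝ) :
    LocallyLipschitzOn (I ×ˢ univ) (lienardForce Φ b p μ) := by
  intro y hy
  have hfst {g : ℝ → ℝ} (hg : ContDiffOn ℝ 1 g I) : ContDiffAt ℝ 1 (fun y : ℝ × ℝ => g y.1) y :=
    (hg.contDiffAt (h.isOpen.mem_nhds hy.1)).comp y contDiffAt_fst
  have hsmooth : ContDiffAt ℝ 1 (lienardForce Φ b p μ) y :=
    (hfst h.contDiffOn_force).add (((hfst h.contDiffOn_weight).mul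
      ((hfst h.contDiffOn_profile).add contDiffAt_const)).mul contDiffAt_snd)
  obtain ⟨L, t, ht, hL⟩ := hsmooth.exists_lipschitzOnWith
  exact ⟨L, t, mem_nhdsWithin_of_mem_nhds ht, hL⟩

theorem isClockwiseLoop (h : IsLienardCenter Φ b p I u₀ ω)
    (hcurve : IsPhaseCurve (lienardForce Φ b p μ) u w) (huI : ∀ t, u t ∈ I) (hZ : 0 < Z)
    (hper : ∀ t, u (t + Z) = u t ∧ w (t + Z) = w t) (hne : Nonconst u w) :
    IsClockwiseLoop u w (fun t => lienardForce Φ b p μ (u t, w t)) u₀ Z := by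
  have hlip := h.locallyLipschitzOn_lienardForce μ
  have hs (t : ℝ) : (u t, w t) ∈ I ×ˢ (univ : Set ℝ) := ⟨huI t, mem_univ _⟩
  have hforce {t : ℝ} (ht : w t = 0) : lienardForce Φ b p μ (u t, w t) = Φ (u t) := by
    simp [lienardForce, ht]
  have hΦ {t : ℝ} (ht : w t = 0) : Φ (u t) ≠ 0 := by
    rw [← hforce ht, ht]
    exact hcurve.not_equilibrium hlip hs hne ht
  obtain ⟨m, M, hm, hM⟩ := exists_min_max_of_periodic (fun t => (hper t).1) hZ
    (continuous_iff_continuousAt.2 fun t => (hcurve.1 t).continuousAt)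
  have hwm : w m = 0 := IsLocalMin.hasDerivAt_eq_zero (.of_forall hm) (hcurve.1 m)
  have hwM : w M = 0 := IsLocalMax.hasDerivAt_eq_zero (.of_forall hM) (hcurve.1 M)
  have hΦm : 0 < Φ (u m) := (hΦ hwm).symm.lt_of_le <| by
    simpa only [hforce hwm] using
      nonneg_of_isLocalMin_of_hasDerivAt (.of_forall hm) hcurve.1 (hcurve.2 m)
  have hΦM : Φ (u M) < 0 := (hΦ hwM).lt_of_le <| by
    simpa only [hforce hwM, neg_nonneg] using
      nonneg_of_isLocalMin_of_hasDerivAt (IsLocalMax.neg (.of_forall hM))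
        (fun t => (hcurve.1 t).neg) (hcurve.2 M).neg
  refine ⟨hcurve.1, hcurve.2, fun t ht => ?_, fun hu hw => hcurve.eq_add_of_eq hlip hs hu hw, hZ,
    hper⟩
  have hsign := h.downcrossing _ (huI m) _ (huI M) hΦm hΦM (u t) ⟨hm t, hM t⟩
  rw [hforce ht]
  rcases (hΦ ht).lt_or_gt with hneg | hpos
  · rw [sign_neg hneg, eq_comm, sign_eq_neg_one_iff, sub_neg] at hsign
    exact .inr ⟨hsign, hneg⟩
  · rw [sign_pos hpos, eq_comm, sign_eq_one_iff, sub_pos] at hsign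
    exact .inl ⟨hsign, hpos⟩

/-- If `μ` were off `-p(u₀)`, the damping coefficient `b (p + μ)` would have a constant sign near
`u₀`, and in one of the two time directions the motion would be damped. -/
theorem exists_abs_add_lt (h : IsLienardCenter Φ b p I u₀ ω) {ε : ℝ} (hε : 0 < ε) :
    ∃ δ > 0, ∀ μ Z u w, IsPhaseCurve (lienardForce Φ b p μ) u w → |u 0 - u₀| < δ → w 0 = 0 →
      0 < Z → (∀ t, u (t + Z) = u t ∧ w (t + Z) = w t) → Nonconst u w → |μ + p u₀| < ε := by
  have hI : I ∈ 𝓝 u₀ := h.isOpen.mem_nhds h.mem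
  have hpc : ContinuousAt p u₀ := h.contDiffOn_profile.continuousOn.continuousAt hI
  obtain ⟨r₀, hr₀, hball⟩ := Metric.eventually_nhds_iff.1
    (((Metric.tendsto_nhds.1 hpc ε hε)).and hI)
  have hsign : ∀ᶠ x in 𝓝 u₀, SignType.sign (Φ x) = SignType.sign (u₀ - x) :=
    eventually_nhdsWithin_sign_eq_of_deriv_neg (h.hasDerivAt_force.deriv ▸
      neg_neg_of_pos (pow_pos h.frequency_pos 2)) h.force_eq_zero
  have hcont : ∀ᶠ x in 𝓝 u₀, ContinuousAt Φ x := by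
    filter_upwards [hI] with x hx using
      h.contDiffOn_force.continuousOn.continuousAt (h.isOpen.mem_nhds hx)
  obtain ⟨r, hr, G, δ, hδ, hwell⟩ := exists_isPotentialWell hcont hsign (half_pos hr₀)
  refine ⟨δ, hδ, fun μ Z u w hcurve hu₀ hw₀ hZ hper hne => ?_⟩
  have hnear {x : ℝ} (hx : |x - u₀| ≤ r) : |p x - p u₀| < ε ∧ 0 < b x := by
    obtain ⟨hpx, hxI⟩ := hball (show dist x u₀ < r₀ from hx.trans_lt (by linarith))
    exact ⟨hpx, h.weight_pos x hxI⟩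
  refine abs_lt.2 ⟨?_, ?_⟩ <;> by_contra! hμ
  · refine (hwell _ hu₀).not_nonconst_of_damped_of_periodic hcurve.1 hcurve.2 hw₀
      (fun t ht => ?_) hZ hper hne
    obtain ⟨hpx, hb⟩ := hnear ht
    exact mul_neg_of_pos_of_neg hb (by linarith [(abs_lt.1 hpx).2])
  · refine IsPotentialWell.not_nonconst_of_damped_of_periodic (u := fun t => u (-t))
      (w := fun t => -w (-t)) (e := fun t => -(b (u (-t)) * (p (u (-t)) + μ))) (hwell _ ?_)
      (fun t => hasDerivAt_comp_neg (hcurve.1 (-t)))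
      (fun t => ?_) (by simpa using hw₀) (fun t ht => ?_) hZ (reverse_periodic hper) ?_
    · simpa using hu₀
    · refine (hasDerivAt_comp_neg (hcurve.2 (-t))).neg.congr_deriv ?_
      simp [lienardForce]
    · obtain ⟨hpx, hb⟩ := hnear ht
      exact neg_neg_of_pos (mul_pos hb (by linarith [(abs_lt.1 hpx).1]))
    · obtain ⟨z, hz⟩ := hne
      exact ⟨-z, by simpa using hz⟩

/-- The perturbation of the linear oscillator consists of the remainder of `Φ` at `u₀`, which is
`o(|x - u₀|)`, and of `y` times the damping coefficient, which vanishes at `(u₀, -p(u₀))`. -/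
theorem exists_abs_lienardForce_add_le (h : IsLienardCenter Φ b p I u₀ ω) {η : ℝ} (hη : 0 < η) :
    ∃ ρ > 0, ∀ μ x y, |μ + p u₀| < ρ → ‖phasePoint ω u₀ x y‖ ≤ ρ →
      |lienardForce Φ b p μ (x, y) + ω ^ 2 * (x - u₀)| ≤ η * ‖phasePoint ω u₀ x y‖ := by
  have hω := h.frequency_pos
  have hI : I ∈ 𝓝 u₀ := h.isOpen.mem_nhds h.mem
  have hforce : ∀ᶠ x in 𝓝 u₀, |Φ x + ω ^ 2 * (x - u₀)| ≤ η / 2 * ω * |x - u₀| := by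
    filter_upwards [(hasDerivAt_iff_isLittleO.1 h.hasDerivAt_force).bound
      (show 0 < η / 2 * ω by positivity)] with x hx
    rw [h.force_eq_zero, sub_zero, smul_eq_mul, Real.norm_eq_abs, Real.norm_eq_abs] at hx
    convert hx using 2
    ring
  have hdamping : ∀ᶠ y : ℝ × ℝ in 𝓝 (u₀, -p u₀), |b y.1 * (p y.1 + y.2)| < η / 2 := by
    have hcont : ContinuousAt (fun y : ℝ × ℝ => b y.1 * (p y.1 + y.2)) (u₀, -p u₀) :=
      ((h.contDiffOn_weight.continuousOn.continuousAt hI).comp continuousAt_fst).mul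
        (((h.contDiffOn_profile.continuousOn.continuousAt hI).comp continuousAt_fst).add
          continuousAt_snd)
    exact hcont.abs.eventually_lt_const (by simpa using hη)
  obtain ⟨r, hr, hball⟩ := Metric.eventually_nhds_iff.1
    ((hforce.prod_inl_nhds (-p u₀)).and hdamping)
  refine ⟨min r (ω * r / 2), by positivity, fun μ x y hμ hxy => ?_⟩
  have hx := mul_abs_sub_le_norm_phasePoint (u₀ := u₀) hω x y
  have hxr : |x - u₀| < r := by
    have := hx.trans (hxy.trans (min_le_right _ _))
    nlinarith
  have hdist : dist (x, μ) (u₀, -p u₀) < r :=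
    max_lt hxr (by simpa [Real.dist_eq] using hμ.trans_le (min_le_left _ _))
  obtain ⟨hΦ, hb⟩ := hball hdist
  have hy : |y| ≤ ‖phasePoint ω u₀ x y‖ := (phasePoint ω u₀ x y).abs_im_le_norm
  calc |lienardForce Φ b p μ (x, y) + ω ^ 2 * (x - u₀)|
      = |(Φ x + ω ^ 2 * (x - u₀)) + b x * (p x + μ) * y| := by
        rw [lienardForce, add_right_comm]
    _ ≤ |Φ x + ω ^ 2 * (x - u₀)| + |b x * (p x + μ)| * |y| :=
        (abs_add_le _ _).trans_eq (by rw [abs_mul _ y])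
    _ ≤ η / 2 * (ω * |x - u₀|) + η / 2 * ‖phasePoint ω u₀ x y‖ := by
        rw [← mul_assoc]
        gcongr
    _ ≤ η / 2 * ‖phasePoint ω u₀ x y‖ + η / 2 * ‖phasePoint ω u₀ x y‖ := by gcongr
    _ = η * ‖phasePoint ω u₀ x y‖ := by ring

theorem exists_forall_near_rotation (h : IsLienardCenter Φ b p I u₀ ω) {κ T : ℝ} (hκ : 0 < κ)
    (hT : 0 < T) : ∃ ρ > 0, ∀ μ u w, IsPhaseCurve (lienardForce Φ b p μ) u w →
      |μ + p u₀| < ρ → |u 0 - u₀| < ρ → w 0 = 0 → u 0 ≠ u₀ → ∀ t ∈ Icc 0 T,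
      ‖phasePoint ω u₀ (u t) (w t)‖ < 2 * (ω * |u 0 - u₀|) ∧
      ‖phasePoint ω u₀ (u t) (w t) / phasePoint ω u₀ (u 0) 0 -
        Complex.exp ((-(ω * t) : ℝ) * Complex.I)‖ ≤ κ * t := by
  have hω := h.frequency_pos
  obtain ⟨η, hη, hηlt⟩ : ∃ η, 0 < η ∧ η < min (1 / (2 * T)) (κ / 2) :=
    exists_between (by positivity)
  have hηT : 2 * η * T < 1 := by
    have := (lt_div_iff₀ (by positivity)).1 (hηlt.trans_le (min_le_left _ _))
    linarith
  have hηκ : 2 * η ≤ κ := by linarith [hηlt.trans_le (min_le_right _ _)]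
  obtain ⟨ρ, hρ, hbound⟩ := h.exists_abs_lienardForce_add_le hη
  refine ⟨min ρ (ρ / (2 * ω)), by positivity, fun μ u w hcurve hμ hu₀ hw₀ hne => ?_⟩
  have hnorm : ‖phasePoint ω u₀ (u 0) (w 0)‖ = ω * |u 0 - u₀| := by
    rw [hw₀, phasePoint, ← Complex.ofReal_def, Complex.norm_real, Real.norm_eq_abs, abs_mul,
      abs_of_pos hω]
  have hpos : 0 < ω * |u 0 - u₀| := mul_pos hω (abs_pos.2 (sub_ne_zero.2 hne))
  have hζ₀ : phasePoint ω u₀ (u 0) (w 0) ≠ 0 := norm_pos_iff.1 (hnorm ▸ hpos)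
  have hR : 2 * ‖phasePoint ω u₀ (u 0) (w 0)‖ ≤ ρ := by
    have := (lt_div_iff₀ (by positivity)).1 (hu₀.trans_le (min_le_right _ _))
    rw [hnorm]
    linarith
  have hN (t : ℝ) (ht : ‖phasePoint ω u₀ (u t) (w t)‖ ≤ ρ) :
      ‖(lienardForce Φ b p μ (u t, w t) + ω ^ 2 * (u t - u₀) : ℝ) * Complex.I‖ ≤
        η * ‖phasePoint ω u₀ (u t) (w t)‖ := by
    rw [norm_mul, Complex.norm_I, mul_one, Complex.norm_real]
    exact hbound μ _ _ (hμ.trans_le (min_le_left _ _)) ht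
  have hζ := hasDerivAt_phasePoint (ω := ω) (u₀ := u₀) hcurve
  intro t ht
  have hnear := norm_div_sub_exp_le_of_near_rotation hζ hN hη.le hR hζ₀ hηT ht
  rw [hw₀] at hnear
  exact ⟨hnorm ▸ norm_lt_of_near_rotation hζ hN hη.le hR hζ₀ hηT t ht,
    hnear.trans (mul_le_mul_of_nonneg_right hηκ ht.1)⟩

/-- Near `u₀` and for `μ` near `-p(u₀)` the orbit winds around the center like a slightly perturbed
rotation. Its first return is a period because a loop meets each side of the axis only once. -/
theorem exists_abs_period_sub_lt (h : IsLienardCenter Φ b p I u₀ ω) {ε : ℝ} (hε : 0 < ε) :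
    ∃ ρ > 0, ∀ μ Z u w, IsPhaseCurve (lienardForce Φ b p μ) u w → (∀ t, u t ∈ I) →
      |μ + p u₀| < ρ → |u 0 - u₀| < ρ → w 0 = 0 → IsMinPeriod u w Z → Nonconst u w →
      |Z - 2 * Real.pi / ω| < ε ∧ ∀ t, ‖phasePoint ω u₀ (u t) (w t)‖ < 2 * (ω * |u 0 - u₀|) := by
  have hω := h.frequency_pos
  obtain ⟨κ₁, hκ₁, hreturn⟩ := exists_return_of_near_rotation hω (half_pos hε)
  obtain ⟨κ₂, hκ₂, hlower⟩ := exists_lt_of_norm_exp_sub_one_le hω (half_pos hε)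
  set T := 2 * Real.pi / ω + ε / 2 with hTdef
  have hT : 0 < T := by positivity
  obtain ⟨ρ, hρ, hnear⟩ := h.exists_forall_near_rotation (κ := min (κ₁ / T) κ₂) (by positivity) hT
  refine ⟨ρ, hρ, fun μ Z u w hcurve huI hμ hu₀ hw₀ ⟨hZ, hper, hmin⟩ hne => ?_⟩
  have hloop := h.isClockwiseLoop hcurve huI hZ hper hne
  have hu₀ne : u 0 ≠ u₀ := hloop.ne_of_eq_zero hw₀
  specialize hnear μ u w hcurve hμ hu₀ hw₀ hu₀ne
  have hclose : ∀ t ∈ Icc 0 T, ‖phasePoint ω u₀ (u t) (w t) / phasePoint ω u₀ (u 0) 0 -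
      Complex.exp ((-(ω * t) : ℝ) * Complex.I)‖ ≤ κ₁ := fun t ht => by
    calc _ ≤ min (κ₁ / T) κ₂ * t := (hnear t ht).2
      _ ≤ κ₁ / T * T := mul_le_mul (min_le_left _ _) ht.2 ht.1 (by positivity)
      _ = κ₁ := div_mul_cancel₀ _ hT.ne'
  have hcont : Continuous fun t => phasePoint ω u₀ (u t) (w t) / phasePoint ω u₀ (u 0) 0 :=
    (continuous_iff_continuousAt.2 fun t =>
      (hasDerivAt_phasePoint hcurve t).continuousAt).div_const _
  obtain ⟨t₁, ht₁, ht₁T, him, hre⟩ := hreturn _ hcont hclose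
  have hZt₁ : Z ≤ t₁ := hmin t₁ ht₁ (hloop.periodic_of_im_div_eq_zero hω hw₀ him hre)
  have hZT : Z ≤ T := by linarith [(abs_le.1 ht₁T).2]
  have hζ₀ : phasePoint ω u₀ (u 0) 0 ≠ 0 := fun hzero =>
    mul_ne_zero hω.ne' (sub_ne_zero.2 hu₀ne) (congrArg Complex.re hzero)
  have hlt : 2 * Real.pi / ω - ε / 2 < Z := hlower Z hZ <| by
    have h0 := hper 0
    have hnearZ := (hnear Z ⟨hZ.le, hZT⟩).2
    rw [zero_add] at h0
    rw [h0.1, h0.2, hw₀, div_self hζ₀] at hnearZ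
    exact hnearZ.trans (mul_le_mul_of_nonneg_right (min_le_right _ _) hZ.le)
  exact ⟨abs_lt.2 ⟨by linarith, by linarith⟩, forall_of_forall_mem_Ico_of_periodic
    (P := fun x y => ‖phasePoint ω u₀ x y‖ < 2 * (ω * |u 0 - u₀|)) hper hZ
    fun s hs => (hnear s ⟨hs.1, hs.2.le.trans hZT⟩).1⟩

theorem exists_forall_periodic_near (h : IsLienardCenter Φ b p I u₀ ω) {ε : ℝ} (hε : 0 < ε) :
    ∃ δ > 0, ∀ μ Z u w, IsPhaseCurve (lienardForce Φ b p μ) u w → (∀ t, u t ∈ I) →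
      |u 0 - u₀| < δ → w 0 = 0 → IsMinPeriod u w Z → Nonconst u w →
      |μ + p u₀| < ε ∧ |Z - 2 * Real.pi / ω| < ε ∧
        ∀ t, Real.sqrt ((u t - u₀) ^ 2 + w t ^ 2) < ε := by
  have hω := h.frequency_pos
  obtain ⟨ρ, hρ, hperiod⟩ := h.exists_abs_period_sub_lt hε
  obtain ⟨δ, hδ, hparam⟩ := h.exists_abs_add_lt (lt_min hε hρ)
  refine ⟨min (min δ ρ) (ε / (2 * (1 + ω))), by positivity, fun μ Z u w hcurve huI hu₀ hw₀ hZ hne =>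
    ?_⟩
  have hμ := hparam μ Z u w hcurve (hu₀.trans_le ((min_le_left _ _).trans (min_le_left _ _))) hw₀
    hZ.1 hZ.2.1 hne
  obtain ⟨hZε, hnorm⟩ := hperiod μ Z u w hcurve huI (hμ.trans_le (min_le_right _ _))
    (hu₀.trans_le ((min_le_left _ _).trans (min_le_right _ _))) hw₀ hZ hne
  refine ⟨hμ.trans_le (min_le_left _ _), hZε, fun t => ?_⟩
  have hu : |u t - u₀| < 2 * |u 0 - u₀| := by
    have := (mul_abs_sub_le_norm_phasePoint hω (u t) (w t)).trans_lt (hnorm t)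
    nlinarith
  have hw : |w t| < 2 * (ω * |u 0 - u₀|) :=
    (phasePoint ω u₀ (u t) (w t)).abs_im_le_norm.trans_lt (hnorm t)
  have hδε := (lt_div_iff₀ (by positivity)).1 (hu₀.trans_le (min_le_right _ _))
  calc Real.sqrt ((u t - u₀) ^ 2 + w t ^ 2) ≤ |u t - u₀| + |w t| :=
        Real.sqrt_le_iff.2 ⟨by positivity, by
          rw [add_sq, sq_abs, sq_abs]
          linarith [mul_nonneg (abs_nonneg (u t - u₀)) (abs_nonneg (w t))]⟩
    _ < |u 0 - u₀| * (2 * (1 + ω)) := by linarith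
    _ < ε := hδε

end IsLienardCenter

/-! ### Concave-convex functions -/

section ConcaveConvex

variable {f : ℝ → ℝ} {f' l m p q u₀ z : ℝ}

theorem pos_and_neg_of_strictConcaveOn_of_strictConvexOn (hconc : StrictConcaveOn ℝ (Icc l m) f)
    (hconv : StrictConvexOn ℝ (Ici m) f) (hlp : l ≤ p) (hpz : p < z) (hzq : z < q) (hp : 0 ≤ f p)
    (hz : f z = 0) (hq : f q ≤ 0) : (∀ x ∈ Ioo p z, 0 < f x) ∧ ∀ x ∈ Ioo z q, f x < 0 := by
  have hconcave {a b x : ℝ} (ha : l ≤ a) (hax : a < x) (hxb : x < b) (hb : b ≤ m) :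
      min (f a) (f b) < f x :=
    hconc.lt_on_openSegment ⟨ha, by linarith⟩ ⟨by linarith, hb⟩ (hax.trans hxb).ne
      (openSegment_eq_Ioo (hax.trans hxb) ▸ ⟨hax, hxb⟩)
  have hconvex {a b x : ℝ} (ha : m ≤ a) (hax : a < x) (hxb : x < b) : f x < max (f a) (f b) :=
    hconv.lt_on_openSegment ha (show m ≤ b by linarith) (hax.trans hxb).ne
      (openSegment_eq_Ioo (hax.trans hxb) ▸ ⟨hax, hxb⟩)
  rcases le_total z m with hzm | hmz
  · have hright : ∀ x ∈ Ioc z m, f x < 0 := fun x hx => by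
      have := hconcave hlp hpz hx.1 hx.2
      grind
    have hm : f m ≤ 0 := by
      rcases hzm.eq_or_lt with rfl | hlt
      · exact hz.le
      · exact (hright m ⟨hlt, le_rfl⟩).le
    refine ⟨fun x hx => ?_, fun x hx => ?_⟩
    · have := hconcave hlp hx.1 hx.2 hzm
      grind
    · rcases le_or_gt x m with hxm | hmx
      · exact hright x ⟨hx.1, hxm⟩
      · have := hconvex le_rfl hmx hx.2
        grind
  · have hleft : ∀ x ∈ Ico m z, 0 < f x := fun x hx => by
      have := hconvex hx.1 hx.2 hzq
      grind
    have hm : 0 ≤ f m := by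
      rcases hmz.eq_or_lt with rfl | hlt
      · exact hz.ge
      · exact (hleft m ⟨le_rfl, hlt⟩).le
    refine ⟨fun x hx => ?_, fun x hx => ?_⟩
    · rcases le_or_gt m x with hmx | hxm
      · exact hleft x ⟨hmx, hx.2⟩
      · have := hconcave hlp hx.1 hxm le_rfl
        grind
    · have := hconvex hmz hx.1 hx.2
      grind

theorem hasDerivAt_neg_of_strictConcaveOn_of_strictConvexOn
    (hconc : StrictConcaveOn ℝ (Icc l m) f) (hconv : StrictConvexOn ℝ (Ici m) f) (hlp : l ≤ p)
    (hpz : p < z) (hzq : z < q) (hp : 0 ≤ f p) (hz : f z = 0) (hq : f q ≤ 0)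
    (hderiv : HasDerivAt f f' z) : f' < 0 := by
  rcases le_total z m with hzm | hmz
  · refine (hconc.lt_slope_of_hasDerivAt ⟨hlp, hpz.le.trans hzm⟩ ⟨hlp.trans hpz.le, hzm⟩ hpz
      hderiv).trans_le ?_
    rw [slope_def_field, hz, zero_sub]
    exact div_nonpos_of_nonpos_of_nonneg (neg_nonpos.2 hp) (sub_nonneg.2 hpz.le)
  · refine (hconv.lt_slope_of_hasDerivAt hmz (hmz.trans hzq.le) hzq hderiv).trans_le ?_
    rw [slope_def_field, hz, sub_zero]
    exact div_nonpos_of_nonpos_of_nonneg hq (sub_nonneg.2 hzq.le)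

/-- Two sign changes of a concave-convex function from `+` to `-` would enclose an interval on
which it has both signs. -/
theorem sign_eq_of_strictConcaveOn_of_strictConvexOn (hconc : StrictConcaveOn ℝ (Icc l m) f)
    (hconv : StrictConvexOn ℝ (Ici m) f) (hcont : ContinuousOn f (Ici l)) (hlu : l ≤ u₀)
    (hu₀ : f u₀ = 0) (hderiv : HasDerivAt f f' u₀) (hf' : f' < 0) (hlp : l ≤ p) (hp : 0 < f p)
    (hq : f q < 0) {x : ℝ} (hx : x ∈ Icc p q) :
    SignType.sign (f x) = SignType.sign (u₀ - x) := by
  have hsign : ∀ᶠ x in 𝓝 u₀, SignType.sign (f x) = SignType.sign (u₀ - x) :=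
    eventually_nhdsWithin_sign_eq_of_deriv_neg (hderiv.deriv ▸ hf') hu₀
  have hpq : p ≤ q := hx.1.trans hx.2
  obtain ⟨z, ⟨hpz, hzq⟩, hz⟩ :=
    intermediate_value_Ioo' hpq (hcont.mono (Icc_subset_Ici_self.trans (Ici_subset_Ici.2 hlp)))
      ⟨hq, hp⟩
  have hpu : p < u₀ := by
    by_contra! hup
    obtain ⟨y, hy, hyz⟩ := ((hsign.filter_mono nhdsWithin_le_nhds).and
      (Ioo_mem_nhdsGT (hup.trans_lt hpz))).exists
    rw [sign_neg (sub_neg.2 hyz.1), sign_eq_neg_one_iff] at hy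
    exact hy.not_gt ((pos_and_neg_of_strictConcaveOn_of_strictConvexOn hconc hconv hlu
      (hup.trans_lt hpz) hzq hu₀.ge hz hq.le).1 y hyz)
  have huq : u₀ < q := by
    by_contra! hqu
    obtain ⟨y, hy, hyz⟩ := ((hsign.filter_mono nhdsWithin_le_nhds).and
      (Ioo_mem_nhdsLT (hzq.trans_le hqu))).exists
    rw [sign_pos (sub_pos.2 hyz.2), sign_eq_one_iff] at hy
    exact hy.not_gt ((pos_and_neg_of_strictConcaveOn_of_strictConvexOn hconc hconv hlp hpz
      (hzq.trans_le hqu) hp.le hz hu₀.le).2 y hyz)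
  obtain ⟨hleft, hright⟩ := pos_and_neg_of_strictConcaveOn_of_strictConvexOn hconc hconv hlp hpu
    huq hp.le hu₀ hq.le
  rcases lt_trichotomy x u₀ with hxu | rfl | hux
  · have : 0 < f x := hx.1.eq_or_lt.elim (fun h => h ▸ hp) fun h => hleft x ⟨h, hxu⟩
    rw [sign_pos this, sign_pos (sub_pos.2 hxu)]
  · rw [hu₀, sub_self]
  · have : f x < 0 := hx.2.eq_or_lt.elim (fun h => h ▸ hq) fun h => hright x ⟨hux, h⟩
    rw [sign_neg this, sign_neg (sub_neg.2 hux)]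

end ConcaveConvex

/-! ### The traveling-wave system -/

theorem strictMonoOn_or_strictAntiOn_of_hasDerivAt_ne_zero {D : Set ℝ} {φ φ' : ℝ → ℝ}
    (hD : Convex ℝ D) (hc : ContinuousOn φ D) (hφ : ∀ x ∈ interior D, HasDerivAt φ (φ' x) x)
    (hne : ∀ x ∈ interior D, φ' x ≠ 0) : StrictMonoOn φ D ∨ StrictAntiOn φ D :=
  (hasDerivWithinAt_forall_lt_or_forall_gt_of_forall_ne hD.interior
    (fun x hx => (hφ x hx).hasDerivWithinAt) hne).symm.imp
    (fun h => strictMonoOn_of_deriv_pos hD hc fun x hx => (hφ x hx).deriv ▸ h x hx)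
    fun h => strictAntiOn_of_deriv_neg hD hc fun x hx => (hφ x hx).deriv ▸ h x hx

theorem contDiffOn_one_of_hasDerivAt {s : Set ℝ} (hs : IsOpen s) {φ φ' : ℝ → ℝ}
    (hφ : ∀ x ∈ s, HasDerivAt φ (φ' x) x) (hc : ContinuousOn φ' s) : ContDiffOn ℝ 1 φ s := by
  refine (contDiffOn_one_iff_derivWithin hs.uniqueDiffOn).2
    ⟨fun x hx => (hφ x hx).differentiableAt.differentiableWithinAt, hc.congr fun x hx => ?_⟩
  rw [derivWithin_of_isOpen hs hx, (hφ x hx).deriv]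

namespace A2

variable {κ : ℝ → ℝ} {τ : ℝ}

theorem pos_one_div (h : A2 κ) {x : ℝ} (hx : 0 < x) : 0 < κ (1 / x) :=
  h.2 _ (one_div_pos.2 hx)

theorem contDiffOn_comp_one_div (h : A2 κ) : ContDiffOn ℝ 1 (fun x => κ (1 / x)) (Ioi 0) :=
  h.1.comp (contDiffOn_const.div contDiffOn_id fun _ hx => ne_of_gt hx) fun _ hx =>
    mem_Ioi.2 (one_div_pos.2 hx)

theorem g1TV_pos (h : A2 κ) (hτ : 0 < τ) {x : ℝ} (hx : 0 < x) : 0 < g1TV κ τ x :=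
  one_div_pos.2 (mul_pos hτ (h.pos_one_div hx))

theorem g2TV_pos (h : A2 κ) (hτ : 0 < τ) {x : ℝ} (hx : 0 < x) : 0 < g2TV κ τ x :=
  div_pos hx (mul_pos (by positivity) (h.pos_one_div hx))

theorem contDiffOn_g1TV (h : A2 κ) (hτ : 0 < τ) : ContDiffOn ℝ 1 (g1TV κ τ) (Ioi 0) :=
  contDiffOn_const.div (contDiffOn_const.mul h.contDiffOn_comp_one_div)
    fun _ hx => (mul_pos hτ (h.pos_one_div hx)).ne'

theorem contDiffOn_g2TV (h : A2 κ) (hτ : 0 < τ) : ContDiffOn ℝ 1 (g2TV κ τ) (Ioi 0) :=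
  contDiffOn_id.div (contDiffOn_const.mul h.contDiffOn_comp_one_div)
    fun _ hx => (mul_pos (by positivity) (h.pos_one_div hx)).ne'

end A2

namespace A1

variable {V V' V'' : ℝ → ℝ} {UM K c : ℝ}

theorem hasDerivAt_V (h : A1 V V' V'' UM) {x : ℝ} (hx : 0 < x) : HasDerivAt V (V' x) x :=
  (h.1 x hx.le).hasDerivAt (Ici_mem_nhds hx)

theorem strictMonoOn_V' (h : A1 V V' V'' UM) : StrictMonoOn V' (Icc 0 UM) := by
  obtain ⟨-, hc, hd, -, -, -, -, hUM, hmax, hzero⟩ := h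
  refine (strictMonoOn_or_strictAntiOn_of_hasDerivAt_ne_zero (φ' := V'') (convex_Icc 0 UM)
    (hc.mono Icc_subset_Ici_self) ?_ ?_).resolve_right fun hanti => ?_
  · rw [interior_Icc]
    exact fun x hx => hd x hx.1
  · rw [interior_Icc]
    exact fun x hx => (hzero x hx.1).not.2 hx.2.ne
  · exact (hmax (UM / 2) (half_pos hUM)).not_gt
      (hanti ⟨(half_pos hUM).le, (half_lt_self hUM).le⟩ ⟨hUM.le, le_rfl⟩ (half_lt_self hUM))

theorem strictAntiOn_V' (h : A1 V V' V'' UM) : StrictAntiOn V' (Ici UM) := by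
  obtain ⟨-, hc, hd, -, -, -, -, hUM, hmax, hzero⟩ := h
  refine (strictMonoOn_or_strictAntiOn_of_hasDerivAt_ne_zero (φ' := V'') (convex_Ici UM)
    (hc.mono (Ici_subset_Ici.2 hUM.le)) ?_ ?_).resolve_left fun hmono => ?_
  · rw [interior_Ici]
    exact fun x hx => hd x (hUM.trans hx)
  · rw [interior_Ici]
    exact fun x hx => (hzero x (hUM.trans hx)).not.2 (ne_of_gt hx)
  · exact (hmax (UM + 1) (by positivity)).not_gt
      (hmono self_mem_Ici (lt_add_one UM).le (lt_add_one UM))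

theorem continuousOn_fTV (h : A1 V V' V'' UM) : ContinuousOn (fTV V K c) (Ici 0) :=
  (((continuousOn_const.mul continuousOn_id).sub
    fun x hx => (h.1 x hx).continuousWithinAt).sub continuousOn_const).div_const K

theorem hasDerivAt_fTV (h : A1 V V' V'' UM) {x : ℝ} (hx : 0 < x) :
    HasDerivAt (fTV V K c) (fdTV V' K x) x :=
  (((((hasDerivAt_id x).const_mul K).sub (h.hasDerivAt_V hx)).sub_const c).div_const K).congr_deriv
    (by rw [mul_one, fdTV])

theorem contDiffOn_fdTV (h : A1 V V' V'' UM) : ContDiffOn ℝ 1 (fdTV V' K) (Ioi 0) :=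
  (contDiffOn_const.sub (contDiffOn_one_of_hasDerivAt isOpen_Ioi h.2.2.1 h.2.2.2.1)).div_const K

theorem contDiffOn_fTV (h : A1 V V' V'' UM) : ContDiffOn ℝ 1 (fTV V K c) (Ioi 0) :=
  contDiffOn_one_of_hasDerivAt isOpen_Ioi (fun _ hx => h.hasDerivAt_fTV hx)
    h.contDiffOn_fdTV.continuousOn

theorem strictConcaveOn_fTV (h : A1 V V' V'' UM) (hK : 0 < K) :
    StrictConcaveOn ℝ (Icc 0 UM) (fTV V K c) := by
  refine StrictAntiOn.strictConcaveOn_of_deriv (convex_Icc 0 UM)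
    (h.continuousOn_fTV.mono Icc_subset_Ici_self) ?_
  rw [interior_Icc]
  intro x hx y hy hxy
  rw [(h.hasDerivAt_fTV hx.1).deriv, (h.hasDerivAt_fTV hy.1).deriv]
  exact div_lt_div_of_pos_right (sub_lt_sub_left
    (h.strictMonoOn_V' (Ioo_subset_Icc_self hx) (Ioo_subset_Icc_self hy) hxy) K) hK

theorem strictConvexOn_fTV (h : A1 V V' V'' UM) (hK : 0 < K) :
    StrictConvexOn ℝ (Ici UM) (fTV V K c) := by
  have hUM : 0 < UM := h.2.2.2.2.2.2.2.1
  refine StrictMonoOn.strictConvexOn_of_deriv (convex_Ici UM)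
    (h.continuousOn_fTV.mono (Ici_subset_Ici.2 hUM.le)) ?_
  rw [interior_Ici]
  intro x hx y hy hxy
  rw [(h.hasDerivAt_fTV (hUM.trans hx)).deriv, (h.hasDerivAt_fTV (hUM.trans hy)).deriv]
  exact div_lt_div_of_pos_right (sub_lt_sub_left
    (h.strictAntiOn_V' (Ioi_subset_Ici_self hx) (Ioi_subset_Ici_self hy) hxy) K) hK

theorem fdTV_neg (h : A1 V V' V'' UM) (hK : 0 < K) {p z q : ℝ} (hp : 0 ≤ p) (hpz : p < z)
    (hzq : z < q) (hfp : 0 ≤ fTV V K c p) (hfz : fTV V K c z = 0) (hfq : fTV V K c q ≤ 0) :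
    fdTV V' K z < 0 :=
  hasDerivAt_neg_of_strictConcaveOn_of_strictConvexOn (h.strictConcaveOn_fTV hK)
    (h.strictConvexOn_fTV hK) hp hpz hzq hfp hfz hfq (h.hasDerivAt_fTV (hp.trans_lt hpz))

theorem V'_zero_nonneg (h : A1 V V' V'' UM) : 0 ≤ V' 0 :=
  ge_of_tendsto ((h.2.1 0 self_mem_Ici).mono_left (nhdsWithin_mono 0 Ioi_subset_Ici_self)) <|
    eventually_mem_nhdsWithin.mono fun x hx => (h.2.2.2.2.1 x hx).le

theorem fdTV_neg_of_mem_D1 (h : A1 V V' V'' UM) {uMx umx : ℝ → ℝ} {u₁ u₀ u₂ : ℝ}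
    (hKc : (K, c) ∈ D1 V V' UM uMx umx) (hzeros : ZerosD1 V K c u₁ u₀ u₂) :
    fdTV V' K u₀ < 0 := by
  obtain ⟨hu₁, h₁₀, h₀₂, hfu₁, hfu₀, hfu₂, -⟩ := hzeros
  exact h.fdTV_neg (h.V'_zero_nonneg.trans_lt hKc.1) hu₁.le h₁₀ h₀₂ hfu₁.ge hfu₀ hfu₂.le

theorem fdTV_neg_of_mem_D2 (h : A1 V V' V'' UM) {umx : ℝ → ℝ} {K₁ u₀ u₂ : ℝ}
    (hKc : (K, c) ∈ D2 V V' umx K₁) (hzeros : ZerosD2 V K c u₀ u₂) : fdTV V' K u₀ < 0 := by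
  obtain ⟨hu₀, h₀₂, hfu₀, hfu₂, -⟩ := hzeros
  have hK : 0 < K := hKc.elim (fun H => h.V'_zero_nonneg.trans_lt H.1) fun H => H.1
  have hc : c ≤ c0v V := hKc.elim (fun H => H.2.2.le) fun H => H.2.2.2.le
  have hf0 : 0 ≤ fTV V K c 0 := div_nonneg (by rw [c0v] at hc; linarith) hK.le
  exact h.fdTV_neg hK le_rfl hu₀ h₀₂ hf0 hfu₀ hfu₂.le

theorem pos_of_fdTV_neg (h : A1 V V' V'' UM) {x : ℝ} (hx : 0 < x) (hf' : fdTV V' K x < 0) :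
    0 < K := by
  by_contra! hK
  exact hf'.not_ge <| div_nonneg_of_nonpos (by linarith [h.2.2.2.2.1 x hx]) hK

theorem isLienardCenter (h : A1 V V' V'' UM) {κ : ℝ → ℝ} {τ u₀ : ℝ} (hA2 : A2 κ) (hτ : 0 < τ)
    (hu₀ : 0 < u₀) (hf : fTV V K c u₀ = 0) (hf' : fdTV V' K u₀ < 0) :
    IsLienardCenter (fun x => g1TV κ τ x * fTV V K c x) (g2TV κ τ) (fdTV V' K) (Ioi 0) u₀
      (Real.sqrt (-(g1TV κ τ u₀ * fdTV V' K u₀))) := by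
  have hω : 0 < -(g1TV κ τ u₀ * fdTV V' K u₀) :=
    neg_pos.2 (mul_neg_of_pos_of_neg (hA2.g1TV_pos hτ hu₀) hf')
  have hK : 0 < K := h.pos_of_fdTV_neg hu₀ hf'
  have hsign {x : ℝ} (hx : 0 < x) :
      SignType.sign (g1TV κ τ x * fTV V K c x) = SignType.sign (fTV V K c x) := by
    rw [sign_mul, sign_pos (hA2.g1TV_pos hτ hx), one_mul]
  refine ⟨isOpen_Ioi, hu₀, (hA2.contDiffOn_g1TV hτ).mul h.contDiffOn_fTV, hA2.contDiffOn_g2TV hτ,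
    h.contDiffOn_fdTV, fun x hx => hA2.g2TV_pos hτ hx, Real.sqrt_pos.2 hω, by rw [hf, mul_zero],
    ?_, fun p hp q hq hfp hfq x hx => ?_⟩
  · have hg : DifferentiableAt ℝ (g1TV κ τ) u₀ :=
      ((hA2.contDiffOn_g1TV hτ).differentiableOn one_ne_zero).differentiableAt (Ioi_mem_nhds hu₀)
    refine (hg.hasDerivAt.mul (h.hasDerivAt_fTV hu₀)).congr_deriv ?_
    rw [hf, Real.sq_sqrt hω.le, mul_zero, zero_add, neg_neg]
  · rw [hsign (lt_of_lt_of_le hp hx.1)]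
    rw [← sign_eq_one_iff, hsign hp, sign_eq_one_iff] at hfp
    rw [← sign_eq_neg_one_iff, hsign hq, sign_eq_neg_one_iff] at hfq
    exact sign_eq_of_strictConcaveOn_of_strictConvexOn (h.strictConcaveOn_fTV hK)
      (h.strictConvexOn_fTV hK) h.continuousOn_fTV hu₀.le hf (h.hasDerivAt_fTV hu₀) hf' hp.le hfp
      hfq hx

end A1

end

theorem stmt18_general {V V' V'' κ : ℝ → ℝ} {τ UM K c u0 : ℝ} (hA1 : A1 V V' V'' UM)
    (hA2 : A2 κ) (hτ : 0 < τ) (hu0 : 0 < u0) (hf : fTV V K c u0 = 0) (hf' : fdTV V' K u0 < 0) :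
    0 < Real.sqrt (- (g1TV κ τ u0 * fdTV V' K u0)) ∧
    ∀ ε : ℝ, 0 < ε → ∃ δ : ℝ, 0 < δ ∧
      ∀ q : ℝ, |q - u0| < δ →
        ∀ (μ Z : ℝ) (u w : ℝ → ℝ), IsTVSol V V' κ τ K c μ u w → (∀ z, 0 < u z) →
          u 0 = q → w 0 = 0 → IsMinPeriod u w Z → Nonconst u w →
          |μ + fdTV V' K u0| < ε ∧
          |Z - 2 * Real.pi / Real.sqrt (- (g1TV κ τ u0 * fdTV V' K u0))| < ε ∧
          ∀ z, Real.sqrt ((u z - u0) ^ 2 + (w z) ^ 2) < ε := by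
  have hcenter := hA1.isLienardCenter hA2 hτ hu0 hf hf'
  refine ⟨hcenter.frequency_pos, fun ε hε => ?_⟩
  obtain ⟨δ, hδ, hnear⟩ := hcenter.exists_forall_periodic_near hε
  refine ⟨δ, hδ, ?_⟩
  rintro _ hq μ Z u w hsol hpos rfl
  exact hnear μ Z u w hsol hpos hq

theorem stmt18
    (V V' V'' κ : ℝ → ℝ) (τ UM K c K₁ : ℝ) (uMx umx : ℝ → ℝ)
    (hA1 : A1 V V' V'' UM) (hA2 : A2 κ) (hτ : 0 < τ) (hK : K ≠ 0)
    (huMx : UMaxHyp V' UM uMx) (humx : UMinHyp V' UM umx)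
    (hK1 : K1Hyp V V' UM umx K₁)
    (hC : CondC V' κ UM K₁ K) (u0 u2 : ℝ) (Adm : Set ℝ)
    (hAdm :
      ((K, c) ∈ D1 V V' UM uMx umx ∧
        ∃ u1 μb μf, ZerosD1 V K c u1 u0 u2 ∧
          (∀ μ, HasHE1 V V' κ τ K c μ u1 u2 ↔ μ = μb) ∧
          (∀ μ, HasHE2 V V' κ τ K c μ u1 u2 ↔ μ = μf) ∧
          ((μf ≤ μb ∧ Adm = Ioo u1 u0) ∨ (μb < μf ∧ Adm = Ioo u0 u2))) ∨
      ((K, c) ∈ D2 V V' umx K₁ ∧ ZerosD2 V K c u0 u2 ∧ Adm = Ioo u0 u2)) :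
    0 < Real.sqrt (- (g1TV κ τ u0 * fdTV V' K u0)) ∧
    ∀ ε : ℝ, 0 < ε → ∃ δ : ℝ, 0 < δ ∧
      ∀ q ∈ Adm, |q - u0| < δ →
        ∀ (μ Z : ℝ) (u w : ℝ → ℝ), IsTVSol V V' κ τ K c μ u w → (∀ z, 0 < u z) →
          u 0 = q → w 0 = 0 → IsMinPeriod u w Z → Nonconst u w →
          |μ + fdTV V' K u0| < ε ∧
          |Z - 2 * Real.pi / Real.sqrt (- (g1TV κ τ u0 * fdTV V' K u0))| < ε ∧
          ∀ z, Real.sqrt ((u z - u0) ^ 2 + (w z) ^ 2) < ε := by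
  have hcenter : 0 < u0 ∧ fTV V K c u0 = 0 ∧ fdTV V' K u0 < 0 := by
    rcases hAdm with ⟨hKc, u1, -, -, hzeros, -⟩ | ⟨hKc, hzeros, -⟩
    · exact ⟨hzeros.1.trans hzeros.2.1, hzeros.2.2.2.2.1, hA1.fdTV_neg_of_mem_D1 hKc hzeros⟩
    · exact ⟨hzeros.1, hzeros.2.2.1, hA1.fdTV_neg_of_mem_D2 hKc hzeros⟩
  obtain ⟨hu0, hf, hf'⟩ := hcenter
  obtain ⟨hω, hnear⟩ := stmt18_general hA1 hA2 hτ hu0 hf hf'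
  exact ⟨hω, fun ε hε => (hnear ε hε).imp fun δ hδ => ⟨hδ.1, fun q _ => hδ.2 q⟩⟩

end TrafficTW
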